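/- arXiv:2006.09857 — 9 statements merged into one kernel-verified Lean document; each statement's English description precedes it below -/
import Mathlib

section
/- Assume γ>0 and the remainder conditions [𝓛_ν] and [ℓ_δ]. Define w(s)=exp(−∫_s^1 (1−x)^{γ−1}·L(1/(1−x)) dx) for s∈[0,1) (the integral converges since γ>0) and Λ(y)=y^{ν}·𝓛(1/y) for y∈(0,1]. Then as s↑1, w(s) = exp( −(1/γ)·(1−s)^{γ}·L(1/(1−s))·(1+O(Λ(1−s))) ); here (1−s)^{γ}·L(1/(1−s)) = −g(s)/Λ(1−s). -/
open Real Filter Asymptotics Set MeasureTheory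

lemma auxA (H : ℝ → ℝ) (ν : ℝ) (hν : 0 < ν) (hc : Continuous H)
    (hO : ∀ a : ℝ, (fun u => H (u + a) - H u) =O[atTop] fun u => exp (H u - ν * u))
    (h0 : ∀ a : ℝ, Tendsto (fun u => H (u + a) - H u) atTop (nhds 0)) :
    ∃ V C : ℝ, 0 ≤ V ∧ 0 ≤ C ∧ ∀ v ≥ V, ∀ t ≥ 0, |H (v + t) - H v| ≤ C * exp (H v - ν * v) := by
  let A : ℕ → Set ℝ := fun n => {a | ∀ u : ℝ, (n:ℝ) ≤ u → |H (u + a) - H u| ≤ n * exp (H u - ν * u)}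
  have hcl : ∀ n, IsClosed (A n) := by
    intro n
    have : A n = ⋂ u : ℝ, ⋂ _ : (n:ℝ) ≤ u, {a | |H (u + a) - H u| ≤ n * exp (H u - ν * u)} := by
      ext a; simp [A]
    rw [this]
    refine isClosed_iInter fun u => isClosed_iInter fun _ => ?_
    exact isClosed_le (by fun_prop) (by fun_prop)
  have hun : (⋃ n, A n) = univ := by
    rw [eq_univ_iff_forall]
    intro a
    obtain ⟨c, hc⟩ := (hO a).bound
    obtain ⟨N, hN⟩ := eventually_atTop.1 hc
    obtain ⟨n, hn⟩ := exists_nat_ge (max c N)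
    refine mem_iUnion.2 ⟨n, fun u hu => ?_⟩
    have h := hN u (le_trans (le_trans (le_max_right _ _) hn) hu)
    rw [Real.norm_eq_abs, Real.norm_eq_abs, abs_of_pos (exp_pos _)] at h
    exact h.trans (mul_le_mul_of_nonneg_right ((le_max_left _ _).trans hn) (exp_pos _).le)
  obtain ⟨n, x, hx⟩ := nonempty_interior_of_iUnion_of_closed hcl hun
  obtain ⟨ε, hε, hball⟩ := Metric.isOpen_iff.1 isOpen_interior x hx
  have hball : Metric.ball x ε ⊆ A n := hball.trans interior_subset
  set d := ε / 2 with hd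
  have hd0 : 0 < d := by positivity
  have hmem : ∀ c, 0 ≤ c → c ≤ d → x + c ∈ A n := fun c hc0 hcd => hball (by
    rw [Metric.mem_ball, Real.dist_eq, add_sub_cancel_left, abs_of_nonneg hc0]; linarith)
  have e1 : ∀ᶠ u in atTop, |H (u + x) - H u| < 1 := by
    have := (h0 x).abs; rw [abs_zero] at this
    exact this.eventually (gt_mem_nhds one_pos)
  have e2 : ∀ᶠ u in atTop, |H (u + d) - H u| < ν * d / 2 := by
    have := (h0 d).abs; rw [abs_zero] at this
    exact this.eventually (gt_mem_nhds (by positivity))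
  obtain ⟨N1, hN1⟩ := eventually_atTop.1 e1
  obtain ⟨N2, hN2⟩ := eventually_atTop.1 e2
  set C0 : ℝ := 2 * n * exp (1 + ν * x) with hC0
  have hC0n : 0 ≤ C0 := by positivity
  set V := max (max 0 N2) (max (n + x) (N1 + x)) with hV
  have hstep : ∀ v ≥ V, ∀ c, 0 ≤ c → c ≤ d → |H (v + c) - H v| ≤ C0 * exp (H v - ν * v) := by
    intro v hv c hc0 hcd
    have hv1 : (n:ℝ) + x ≤ v := le_trans (le_trans (le_max_left _ _) (le_max_right _ _)) hv
    have hv2 : N1 + x ≤ v := le_trans (le_trans (le_max_right _ _) (le_max_right _ _)) hv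
    have h1 := hmem c hc0 hcd (v - x) (by linarith)
    have h2 := hmem 0 le_rfl hd0.le (v - x) (by linarith)
    have h3 := hN1 (v - x) (by linarith)
    rw [show v - x + (x + c) = v + c by ring] at h1
    rw [show v - x + (x + 0) = v by ring] at h2
    rw [show v - x + x = v by ring] at h3
    have h4 : exp (H (v - x) - ν * (v - x)) ≤ exp (1 + ν * x) * exp (H v - ν * v) := by
      rw [← exp_add]; apply exp_le_exp.2
      have := (abs_lt.1 h3).1
      nlinarith
    have h5 : (n:ℝ) * exp (H (v - x) - ν * (v - x)) ≤ n * (exp (1 + ν * x) * exp (H v - ν * v)) :=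
      mul_le_mul_of_nonneg_left h4 (Nat.cast_nonneg n)
    have := abs_le.1 h1
    have := abs_le.1 h2
    rw [hC0, abs_le]
    constructor <;> linarith
  set q := exp (-(ν * d / 2)) with hq
  have hq1 : q < 1 := by rw [hq, exp_lt_one_iff]; have : 0 < ν * d := by positivity
                         linarith
  have hη : ∀ v ≥ V, exp (H (v + d) - ν * (v + d)) ≤ q * exp (H v - ν * v) := by
    intro v hv
    have h3 := hN2 v (le_trans (le_trans (le_max_right _ _) (le_max_left _ _)) hv)
    rw [hq, ← exp_add]; apply exp_le_exp.2
    have := (abs_lt.1 h3).2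
    linarith
  set C := C0 / (1 - q) with hCdef
  have h1q : 0 < 1 - q := by linarith
  have hC : C * q + C0 = C := by rw [hCdef]; field_simp; ring
  have hCn : 0 ≤ C := by positivity
  have hq0 : 0 < q := exp_pos _
  have hC0C : C0 ≤ C := by nlinarith
  have key : ∀ k : ℕ, ∀ v ≥ V, ∀ t, 0 ≤ t → t ≤ k * d → |H (v + t) - H v| ≤ C * exp (H v - ν * v) := by
    intro k
    induction k with
    | zero =>
      intro v hv t ht0 ht
      have : t = 0 := by simp at ht; linarith
      subst this; simp; positivity
    | succ k ih =>
      intro v hv t ht0 ht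
      push_cast at ht
      by_cases htd : t ≤ d
      · exact (hstep v hv t ht0 htd).trans (mul_le_mul_of_nonneg_right hC0C (exp_pos _).le)
      · push Not at htd
        have h1 := ih (v + d) (by linarith) (t - d) (by linarith) (by linarith)
        rw [show v + d + (t - d) = v + t by ring] at h1
        have h2 := hstep v hv d hd0.le le_rfl
        have h3 := mul_le_mul_of_nonneg_left (hη v hv) hCn
        have h4 : C * (q * exp (H v - ν * v)) + C0 * exp (H v - ν * v) = C * exp (H v - ν * v) := by
          rw [← mul_assoc, ← add_mul, hC]
        have := abs_le.1 h1
        have := abs_le.1 h2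
        rw [abs_le]
        constructor <;> linarith
  refine ⟨V, C, le_trans (le_max_left _ _) (le_max_left _ _), hCn, fun v hv t ht => ?_⟩
  obtain ⟨k, hk⟩ := exists_nat_ge (t / d)
  exact key k v hv t ht ((div_le_iff₀ hd0).1 hk)

lemma auxB (f : ℝ → ℝ) (ν : ℝ) (hν : 0 < ν) (hpos : ∀ x ∈ Ici (1:ℝ), 0 < f x)
    (hcont : ContinuousOn f (Ici 1))
    (hsv : ∀ lam > (0:ℝ), Tendsto (fun x => f (lam * x) / f x) atTop (nhds 1))
    (hrem : ∀ lam > (0:ℝ), (fun x => f (lam * x) / f x - 1) =O[atTop] fun x => f x / x ^ ν) :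
    ∃ X K m : ℝ, 1 ≤ X ∧ 0 ≤ K ∧ 0 < m ∧ ∀ x ≥ X, m ≤ f x ∧
      ∀ t ≥ 1, |log (f (t * x)) - log (f x)| ≤ K * x ^ (-ν) := by
  set H : ℝ → ℝ := fun u => log (f (exp (max u 0))) with hH
  have hmem : ∀ u : ℝ, exp (max u 0) ∈ Ici (1:ℝ) := fun u => by
    simp [one_le_exp_iff]
  have hHc : Continuous H := by
    refine Continuous.log ?_ (fun u => (hpos _ (hmem u)).ne')
    exact hcont.comp_continuous (by fun_prop) hmem
  have hHe : ∀ x ≥ 1, H (log x) = log (f x) := fun x hx => by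
    simp only [hH]; rw [max_eq_left (log_nonneg hx), exp_log (by linarith)]
  have hev : ∀ a : ℝ, (fun u => H (u + a) - H u) =ᶠ[atTop]
      fun u => log (f (exp a * exp u) / f (exp u)) := by
    intro a
    filter_upwards [eventually_ge_atTop 0, eventually_ge_atTop (-a)] with u hu hua
    have h1 : max (u + a) 0 = u + a := max_eq_left (by linarith)
    have h2 : max u 0 = u := max_eq_left hu
    have p1 := hpos _ (hmem (u + a))
    have p2 := hpos _ (hmem u)
    simp only [hH]
    rw [← log_div p1.ne' p2.ne', h1, h2, exp_add, mul_comm (exp u)]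
  have hlim : ∀ a : ℝ, Tendsto (fun u => f (exp a * exp u) / f (exp u)) atTop (nhds 1) := fun a =>
    (hsv _ (exp_pos a)).comp tendsto_exp_atTop
  have h0 : ∀ a : ℝ, Tendsto (fun u => H (u + a) - H u) atTop (nhds 0) := by
    intro a
    refine Tendsto.congr' (hev a).symm ?_
    have := (hlim a).log one_ne_zero
    simpa using this
  have hO : ∀ a : ℝ, (fun u => H (u + a) - H u) =O[atTop] fun u => exp (H u - ν * u) := by
    intro a
    refine (hev a).trans_isBigO ?_
    have h1 : (fun y => log y - log 1) =O[nhds 1] fun y => y - 1 :=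
      (hasDerivAt_log one_ne_zero).differentiableAt.isBigO_sub
    have h2 := h1.comp_tendsto (hlim a)
    have h3 := (hrem _ (exp_pos a)).comp_tendsto tendsto_exp_atTop
    simp only [Function.comp_def, log_one, sub_zero] at h2 h3
    refine (h2.trans h3).congr' EventuallyEq.rfl ?_
    filter_upwards [eventually_ge_atTop 0] with u hu
    have h2 : max u 0 = u := max_eq_left hu
    have p2 := hpos _ (hmem u)
    simp only [hH]
    rw [exp_sub, exp_log p2, h2, ← exp_mul, mul_comm u]
  obtain ⟨V, C, hV, hC, key⟩ := auxA H ν hν hHc hO h0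
  have hb : ∀ v ≥ V, |H v - H V| ≤ C * exp (H V - ν * V) := fun v hv => by
    simpa using key V le_rfl (v - V) (by linarith)
  set B := C * exp (H V - ν * V) with hB
  have hX : ∀ x ≥ exp V, 1 ≤ x ∧ V ≤ log x := fun x hx =>
    ⟨(one_le_exp hV).trans hx, (le_log_iff_exp_le (lt_of_lt_of_le (exp_pos _) hx)).2 hx⟩
  refine ⟨exp V, C * exp (H V + B), exp (H V - B), one_le_exp hV, by positivity, exp_pos _, ?_⟩
  intro x hx
  obtain ⟨hx1, hxV⟩ := hX x hx
  have hx0 : 0 < x := by linarith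
  have hbx := abs_le.1 (hb _ hxV)
  refine ⟨?_, fun t ht => ?_⟩
  · rw [← exp_log (hpos x hx1), ← hHe x hx1]
    apply exp_le_exp.2; linarith
  · have := key (log x) hxV (log t) (log_nonneg ht)
    rw [← log_mul hx0.ne' (by linarith), mul_comm x, hHe x hx1, hHe (t * x) (by nlinarith)] at this
    refine this.trans ?_
    rw [mul_assoc]
    refine mul_le_mul_of_nonneg_left ?_ hC
    rw [rpow_def_of_pos hx0, ← exp_add]
    apply exp_le_exp.2
    rw [← hHe x hx1]; linarith

theorem stmt2
    (ν δ γ : ℝ) (hν0 : 0 < ν) (hν1 : ν < 1) (hδ0 : 0 < δ) (hδ1 : δ < 1)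
    (hγ : γ = δ - ν)
    (hγpos : 0 < γ)
    (𝓛 ℓ : ℝ → ℝ)
    (h𝓛pos : ∀ x ∈ Ici (1:ℝ), 0 < 𝓛 x) (hℓpos : ∀ x ∈ Ici (1:ℝ), 0 < ℓ x)
    (h𝓛cont : ContinuousOn 𝓛 (Ici 1)) (hℓcont : ContinuousOn ℓ (Ici 1))
    (h𝓛sv : ∀ lam > (0:ℝ), Tendsto (fun x => 𝓛 (lam * x) / 𝓛 x) atTop (nhds 1))
    (hℓsv : ∀ lam > (0:ℝ), Tendsto (fun x => ℓ (lam * x) / ℓ x) atTop (nhds 1))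
    (h𝓛rem : ∀ lam > (0:ℝ),
      (fun x => 𝓛 (lam * x) / 𝓛 x - 1) =O[atTop] fun x => 𝓛 x / x ^ ν)
    (hℓrem : ∀ lam > (0:ℝ),
      (fun x => ℓ (lam * x) / ℓ x - 1) =O[atTop] fun x => ℓ x / x ^ δ)
 :
    ∃ E : ℝ → ℝ,
      (E =O[nhdsWithin 1 (Iio 1)] fun s => (1 - s) ^ ν * 𝓛 (1 / (1 - s))) ∧
      (∀ᶠ s in nhdsWithin (1:ℝ) (Iio 1),
        Real.exp (-∫ x in s..(1:ℝ), (1 - x) ^ (γ - 1) * (ℓ (1 / (1 - x)) / 𝓛 (1 / (1 - x)))) =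
          Real.exp (-(1 / γ) * ((1 - s) ^ γ * (ℓ (1 / (1 - s)) / 𝓛 (1 / (1 - s)))) * (1 + E s))) ∧
      (∀ s ∈ Ico (0:ℝ) 1,
        (1 - s) ^ γ * (ℓ (1 / (1 - s)) / 𝓛 (1 / (1 - s))) =
          -(-(1 - s) ^ δ * ℓ (1 / (1 - s))) / ((1 - s) ^ ν * 𝓛 (1 / (1 - s)))) := by
  obtain ⟨X1, K1, m, hX1, hK1, hm, h1⟩ := auxB 𝓛 ν hν0 h𝓛pos h𝓛cont h𝓛sv h𝓛rem
  obtain ⟨X2, K2, m2, hX2, hK2, hm2, h2⟩ := auxB ℓ δ hδ0 hℓpos hℓcont hℓsv hℓrem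
  set L : ℝ → ℝ := fun x => ℓ x / 𝓛 x with hL
  have hLpos : ∀ x, 1 ≤ x → 0 < L x := fun x hx => div_pos (hℓpos x hx) (h𝓛pos x hx)
  set K := K1 + K2 with hK
  have hK0 : 0 ≤ K := by positivity
  set X := max X1 X2 with hX
  have hX1' : 1 ≤ X := hX1.trans (le_max_left _ _)
  have hlog : ∀ x ≥ X, ∀ t ≥ 1, |log (L (t * x)) - log (L x)| ≤ K * x ^ (-ν) := by
    intro x hx t ht
    have hx1 : 1 ≤ x := hX1'.trans hx
    have htx : 1 ≤ t * x := by nlinarith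
    have a1 := (h1 x ((le_max_left _ _).trans hx)).2 t ht
    have a2 := (h2 x ((le_max_right _ _).trans hx)).2 t ht
    have a3 : x ^ (-δ) ≤ x ^ (-ν) := rpow_le_rpow_of_exponent_le hx1 (by linarith)
    have a4 := mul_le_mul_of_nonneg_left a3 hK2
    simp only [hL]
    rw [log_div (hℓpos _ htx).ne' (h𝓛pos _ htx).ne', log_div (hℓpos _ hx1).ne' (h𝓛pos _ hx1).ne', hK, add_mul]
    have := abs_le.1 a1
    have := abs_le.1 a2
    rw [abs_le]
    constructor <;> linarith
  set K' := K * exp K with hK'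
  have hK'0 : 0 ≤ K' := by positivity
  have hunif : ∀ x ≥ X, ∀ z ≥ x, |L z - L x| ≤ L x * (K' * x ^ (-ν)) := by
    intro x hx z hz
    have hx1 : 1 ≤ x := hX1'.trans hx
    have hx0 : 0 < x := by linarith
    have a := hlog x hx (z / x) ((one_le_div hx0).2 hz)
    rw [div_mul_cancel₀ _ hx0.ne'] at a
    set r := log (L z) - log (L x) with hr
    have hLx := hLpos x hx1
    have hLz := hLpos z (hx1.trans hz)
    have e : L z = L x * exp r := by
      rw [hr, exp_sub, exp_log hLz, exp_log hLx]; field_simp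
    have hxν : x ^ (-ν) ≤ 1 := rpow_le_one_of_one_le_of_nonpos hx1 (by linarith)
    have hxν0 : 0 < x ^ (-ν) := rpow_pos_of_pos hx0 _
    have hrK : |r| ≤ K := a.trans (by nlinarith)
    have hE : |exp r - 1| ≤ |r| * exp |r| := by
      have b1 := add_one_le_exp r
      have b2 := add_one_le_exp (-r)
      have b3 : exp r * exp (-r) = 1 := by rw [← exp_add]; simp
      have b4 := exp_pos r
      rcases le_total 0 r with h | h
      · rw [abs_of_nonneg h, abs_of_nonneg (by linarith)]
        nlinarith
      · rw [abs_of_nonpos h, abs_of_nonpos (sub_nonpos.2 (exp_le_one_iff.2 h))]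
        have : 1 ≤ exp (-r) := one_le_exp (by linarith)
        nlinarith
    rw [e, show L x * exp r - L x = L x * (exp r - 1) by ring, abs_mul, abs_of_pos hLx]
    refine mul_le_mul_of_nonneg_left (hE.trans ?_) hLx.le
    calc |r| * exp |r| ≤ (K * x ^ (-ν)) * exp K :=
          mul_le_mul a (exp_le_exp.2 hrK) (exp_pos _).le (by positivity)
      _ = _ := by rw [hK']; ring
  set I : ℝ → ℝ := fun s => ∫ x in s..(1:ℝ), (1 - x) ^ (γ - 1) * (ℓ (1 / (1 - x)) / 𝓛 (1 / (1 - x))) with hI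
  have hIint : ∀ s, I s = ∫ y in (0:ℝ)..(1 - s), y ^ (γ - 1) * L (1 / y) := by
    intro s
    have := intervalIntegral.integral_comp_sub_left (a := s) (b := 1)
      (fun y : ℝ => y ^ (γ - 1) * L (1 / y)) 1
    rw [sub_self] at this
    exact this
  have hmain : ∀ h, 0 < h → X ≤ 1 / h →
      |(∫ y in (0:ℝ)..h, y ^ (γ - 1) * L (1 / y)) - h ^ γ / γ * L (1 / h)|
        ≤ h ^ γ / γ * L (1 / h) * (K' * h ^ ν) := by
    intro h hh hXh
    have hpowint : IntervalIntegrable (fun y : ℝ => y ^ (γ - 1)) volume 0 h :=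
      intervalIntegral.intervalIntegrable_rpow' (by linarith)
    have hpow : ∫ y in (0:ℝ)..h, y ^ (γ - 1) = h ^ γ / γ := by
      rw [integral_rpow (Or.inl (by linarith))]
      simp [zero_rpow hγpos.ne']
    have hxe : (1 / h) ^ (-ν) = h ^ ν := by
      rw [one_div, inv_rpow hh.le, rpow_neg hh.le, inv_inv]
    have hbd : ∀ y ∈ Ioc (0:ℝ) h,
        ‖y ^ (γ - 1) * (L (1 / y) - L (1 / h))‖ ≤ L (1 / h) * (K' * h ^ ν) * y ^ (γ - 1) := by
      intro y hy
      have := hunif (1 / h) hXh (1 / y) (one_div_le_one_div_of_le hy.1 hy.2)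
      rw [hxe] at this
      have hp : 0 < y ^ (γ - 1) := rpow_pos_of_pos hy.1 _
      rw [norm_mul, Real.norm_eq_abs, Real.norm_eq_abs, abs_of_pos hp, mul_comm]
      exact mul_le_mul_of_nonneg_right this hp.le
    have hcontF : ContinuousOn (fun y : ℝ => y ^ (γ - 1) * (L (1 / y) - L (1 / h))) (Ioc 0 h) := by
      refine ContinuousOn.mul ?_ (ContinuousOn.sub ?_ continuousOn_const)
      · exact fun y hy => (continuousAt_rpow_const y _ (Or.inl hy.1.ne')).continuousWithinAt
      · have hLc : ContinuousOn L (Ici 1) := hℓcont.div h𝓛cont fun x hx => (h𝓛pos x hx).ne'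
        refine hLc.comp (continuousOn_const.div continuousOn_id fun y hy => hy.1.ne') ?_
        intro y hy
        exact (hX1'.trans hXh).trans (one_div_le_one_div_of_le hy.1 hy.2)
    have hgint : IntervalIntegrable (fun y : ℝ => L (1 / h) * (K' * h ^ ν) * y ^ (γ - 1)) volume 0 h :=
      hpowint.const_mul _
    have hdint : IntervalIntegrable (fun y : ℝ => y ^ (γ - 1) * (L (1 / y) - L (1 / h))) volume 0 h := by
      refine hgint.mono_fun ?_ ?_
      · rw [uIoc_of_le hh.le]
        exact hcontF.aestronglyMeasurable measurableSet_Ioc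
      · rw [uIoc_of_le hh.le]
        refine (ae_restrict_iff' measurableSet_Ioc).2 (Eventually.of_forall fun y hy => ?_)
        exact (hbd y hy).trans (le_abs_self _)
    have hsplit : (∫ y in (0:ℝ)..h, y ^ (γ - 1) * L (1 / y)) =
        (∫ y in (0:ℝ)..h, y ^ (γ - 1) * (L (1 / y) - L (1 / h))) + h ^ γ / γ * L (1 / h) := by
      rw [← hpow, ← intervalIntegral.integral_mul_const,
        ← intervalIntegral.integral_add hdint (hpowint.mul_const _)]
      congr 1; ext y; ring
    rw [hsplit, add_sub_cancel_right, ← Real.norm_eq_abs]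
    refine (intervalIntegral.norm_integral_le_of_norm_le hh.le
      (Eventually.of_forall hbd) hgint).trans ?_
    rw [intervalIntegral.integral_const_mul, hpow]
    apply le_of_eq; ring
  have hev : ∀ᶠ s in nhdsWithin (1:ℝ) (Iio 1), 0 < 1 - s ∧ X ≤ 1 / (1 - s) := by
    have hX0 : 0 < X := by linarith
    have : Ioo (1 - 1 / X) 1 ∈ nhdsWithin (1:ℝ) (Iio 1) :=
      Ioo_mem_nhdsLT (by have : 0 < 1 / X := by positivity
                         linarith)
    filter_upwards [this] with s hs
    have h0 : 0 < 1 - s := by linarith [hs.2]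
    refine ⟨h0, ?_⟩
    rw [le_one_div hX0 h0]; linarith [hs.1]
  refine ⟨fun s => I s / ((1 - s) ^ γ / γ * L (1 / (1 - s))) - 1, ?_, ?_, ?_⟩
  · refine IsBigO.of_bound (K' / m) ?_
    filter_upwards [hev] with s hs
    obtain ⟨h0, hXs⟩ := hs
    have hD : 0 < (1 - s) ^ γ / γ * L (1 / (1 - s)) :=
      mul_pos (div_pos (rpow_pos_of_pos h0 _) hγpos) (hLpos _ (hX1'.trans hXs))
    have hp : 0 < (1 - s) ^ ν := rpow_pos_of_pos h0 _
    have hmL := (h1 _ ((le_max_left _ _).trans hXs)).1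
    have hM := hmain _ h0 hXs
    rw [← hIint] at hM
    have e : I s / ((1 - s) ^ γ / γ * L (1 / (1 - s))) - 1 =
        (I s - (1 - s) ^ γ / γ * L (1 / (1 - s))) / ((1 - s) ^ γ / γ * L (1 / (1 - s))) := by
      rw [sub_div, div_self hD.ne']
    rw [e, Real.norm_eq_abs, Real.norm_eq_abs, abs_div, abs_of_pos hD,
      abs_of_pos (mul_pos hp (hm.trans_le hmL))]
    calc _ ≤ K' * (1 - s) ^ ν := by rw [div_le_iff₀ hD]; linarith
      _ = K' / m * ((1 - s) ^ ν * m) := by field_simp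
      _ ≤ _ := by gcongr
  · filter_upwards [hev] with s hs
    obtain ⟨h0, hXs⟩ := hs
    have hD1 : 0 < (1 - s) ^ γ := rpow_pos_of_pos h0 _
    have hD2 := hLpos _ (hX1'.trans hXs)
    have : -(1 / γ) * ((1 - s) ^ γ * L (1 / (1 - s))) *
        (1 + (I s / ((1 - s) ^ γ / γ * L (1 / (1 - s))) - 1)) = - I s := by
      field_simp; ring
    exact congrArg Real.exp this.symm
  · intro s hs
    have h0 : 0 < 1 - s := by linarith [hs.2]
    have p := rpow_pos_of_pos h0 ν
    rw [hγ, rpow_sub h0]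
    rw [neg_mul, neg_neg, div_mul_div_comm]
end

section
/- Assume only the basic hypothesis on f (0<ν<1, 𝓛 slowly varying). Define N(t)=(νt)^{1/ν}·R(t;0) for t>0 and M(t;s)=νt·(1 − R(t;s)/R(t;0)), so that R(t;s) = (N(t)/(νt)^{1/ν})·(1 − M(t;s)/(νt)). Then: (a) N is slowly varying at infinity; (b) N^{ν}(t)·𝓛( (νt)^{1/ν} / N(t) ) → 1 as t→∞; (c) M(t;0)=0 for all t>0; and (d) for each s∈[0,1), M(t;s) → 𝓜(s) := ∫_1^{1/(1−s)} dx / ( x^{1−ν}·𝓛(x) ) as t→∞, where 𝓜 is the generating function of the invariant measures of the Markov branching process. -/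
open Real Filter Asymptotics Set MeasureTheory

lemma aux_unif (h : ℝ → ℝ) (hc : Continuous h)
    (hs : ∀ u, Tendsto (fun x => h (x + u) - h x) atTop (nhds 0)) :
    ∃ δ > 0, ∃ X ≥ (0:ℝ), ∀ x ≥ X, ∀ v, 0 ≤ v → v ≤ δ → h (x + v) - h x ≤ 2 := by
  let E : ℕ → Set ℝ := fun n => {u | ∀ x ≥ (n:ℝ), |h (x + u) - h x| ≤ 1}
  have hcl : ∀ n, IsClosed (E n) := by
    intro n
    have : E n = ⋂ x ∈ Ici (n:ℝ), {u | |h (x + u) - h x| ≤ 1} := by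
      ext u; simp [E]
    rw [this]
    exact isClosed_biInter fun x _ => isClosed_le (by fun_prop) continuous_const
  have hU : ⋃ n, E n = univ := by
    rw [eq_univ_iff_forall]
    intro u
    have h1 := (hs u).eventually (Metric.ball_mem_nhds 0 one_pos)
    obtain ⟨X, hX⟩ := eventually_atTop.1 h1
    obtain ⟨n, hn⟩ := exists_nat_ge X
    refine mem_iUnion.2 ⟨n, fun x hx => ?_⟩
    have := hX x (hn.trans hx)
    rw [Real.dist_eq, sub_zero] at this
    exact this.le
  obtain ⟨n, a, ha⟩ := nonempty_interior_of_iUnion_of_closed hcl hU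
  obtain ⟨r, hr, hball⟩ := Metric.isOpen_iff.1 isOpen_interior a ha
  refine ⟨r / 2, by positivity, n + |a|, by positivity, fun x hx v hv0 hv => ?_⟩
  have hxa : x - a ≥ n := by have := le_abs_self a; linarith
  have m1 : a + v ∈ E n := interior_subset (hball (by
    rw [Metric.mem_ball, Real.dist_eq, add_sub_cancel_left, abs_of_nonneg hv0]; linarith))
  have m2 : a ∈ E n := interior_subset ha
  have e1 := abs_le.1 (m1 (x - a) hxa)
  have e2 := abs_le.1 (m2 (x - a) hxa)
  rw [show x - a + (a + v) = x + v by ring] at e1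
  rw [show x - a + a = x by ring] at e2
  linarith [e1.2, e2.1]

lemma aux_potter (h : ℝ → ℝ) (hc : Continuous h)
    (hs : ∀ u, Tendsto (fun x => h (x + u) - h x) atTop (nhds 0)) (η : ℝ) (hη : 0 < η) :
    ∃ C, ∀ z ≥ (0:ℝ), ∀ w ≥ z, h w - h z ≤ C + η * (w - z) := by
  obtain ⟨δ, hδ, X0, hX0, H0⟩ := aux_unif h hc hs
  have h1 := (hs δ).eventually (Metric.ball_mem_nhds 0 (mul_pos hη hδ))
  obtain ⟨X1, hX1⟩ := eventually_atTop.1 h1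
  obtain ⟨X, hXX0, hXX1⟩ : ∃ X, X0 ≤ X ∧ X1 ≤ X := ⟨max X0 X1, le_max_left _ _, le_max_right _ _⟩
  have step : ∀ n : ℕ, ∀ x ≥ X, h (x + n * δ) - h x ≤ η * (n * δ) := by
    intro n
    induction n with
    | zero => intro x _; simp
    | succ k ih =>
      intro x hx
      have a1 := ih x hx
      have hk : (0:ℝ) ≤ k * δ := by positivity
      have a2 := hX1 (x + k * δ) (by linarith)
      rw [Real.dist_eq, sub_zero] at a2
      have a3 := (abs_lt.1 a2).2
      rw [show x + k * δ + δ = x + (↑(k + 1) : ℝ) * δ by push_cast; ring] at a3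
      push_cast at a3 ⊢
      linarith
  have big : ∀ x ≥ X, ∀ w ≥ x, h w - h x ≤ 2 + η * (w - x) := by
    intro x hx w hw
    have hu : 0 ≤ (w - x) / δ := div_nonneg (by linarith) hδ.le
    have f1 := Nat.floor_le hu
    have f2 := (Nat.lt_floor_add_one ((w - x) / δ)).le
    set n := ⌊(w - x) / δ⌋₊
    rw [le_div_iff₀ hδ] at f1
    rw [div_le_iff₀ hδ] at f2
    have hn : (0:ℝ) ≤ n * δ := by positivity
    have b1 := step n x hx
    have b2 := H0 (x + n * δ) (by linarith) (w - x - n * δ) (by linarith) (by linarith)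
    rw [show x + n * δ + (w - x - n * δ) = w by ring] at b2
    have : η * (n * δ) ≤ η * (w - x) := mul_le_mul_of_nonneg_left f1 hη.le
    linarith
  obtain ⟨B, hB⟩ := (isCompact_Icc (a := (0:ℝ)) (b := X)).exists_bound_of_continuousOn hc.continuousOn
  have hB0 : 0 ≤ B := (norm_nonneg _).trans (hB 0 ⟨le_rfl, by linarith⟩)
  refine ⟨2 + 2 * B, fun z hz w hw => ?_⟩
  have hp : 0 ≤ η * (w - z) := mul_nonneg hη.le (by linarith)
  by_cases hzX : X ≤ z
  · have := big z hzX w hw; linarith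
  push Not at hzX
  have c1 := abs_le.1 (hB z ⟨hz, hzX.le⟩)
  by_cases hwX : w ≤ X
  · have c2 := abs_le.1 (hB w ⟨by linarith, hwX⟩)
    linarith [c1.1, c2.2]
  push Not at hwX
  have c2 := abs_le.1 (hB X ⟨by linarith, le_rfl⟩)
  have := big X le_rfl w hwX.le
  have : η * (w - X) ≤ η * (w - z) := mul_le_mul_of_nonneg_left (by linarith) hη.le
  linarith [c1.1, c2.2]

lemma aux_karamata (h : ℝ → ℝ) (hc : Continuous h)
    (hs : ∀ u, Tendsto (fun x => h (x + u) - h x) atTop (nhds 0)) (ν : ℝ) (hν : 0 < ν) :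
    Tendsto (fun w => (∫ z in (0:ℝ)..w, exp (ν * z - h z)) / exp (ν * w - h w)) atTop
      (nhds (1 / ν)) := by
  obtain ⟨C, hC⟩ := aux_potter h hc hs (ν / 2) (by positivity)
  have key : Tendsto (fun w => ∫ v in Ioi (0:ℝ),
      (Iic w).indicator (fun v => exp (-ν * v + (h w - h (w - v)))) v) atTop
      (nhds (∫ v in Ioi (0:ℝ), exp (-ν * v))) := by
    apply tendsto_integral_filter_of_dominated_convergence
      (fun v => exp C * exp (-(ν / 2) * v))
    · refine Eventually.of_forall fun w => ?_
      refine AEStronglyMeasurable.indicator ?_ measurableSet_Iic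
      exact Continuous.aestronglyMeasurable (by fun_prop)
    · refine Eventually.of_forall fun w => ?_
      refine (ae_restrict_iff' measurableSet_Ioi).2 (Eventually.of_forall fun v hv => ?_)
      by_cases hvw : v ∈ Iic w
      · rw [indicator_of_mem hvw, Real.norm_eq_abs, abs_of_pos (exp_pos _), ← exp_add]
        apply exp_le_exp.2
        have hvw' : v ≤ w := hvw
        have hv' : 0 < v := hv
        have := hC (w - v) (by linarith) w (by linarith)
        rw [show w - (w - v) = v by ring] at this
        linarith
      · rw [indicator_of_notMem hvw, norm_zero]; positivity
    · exact (integrableOn_exp_mul_Ioi (by linarith) 0).const_mul _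
    · refine Eventually.of_forall fun v => ?_
      have h1 : Tendsto (fun w => h w - h (w - v)) atTop (nhds 0) := by
        have := ((hs (-v)).neg)
        simpa [sub_eq_add_neg, add_comm] using this
      have h2 : Tendsto (fun w => exp (-ν * v + (h w - h (w - v)))) atTop
          (nhds (exp (-ν * v))) := by
        have := (continuous_exp.tendsto _).comp (h1.const_add (-ν * v))
        rw [add_zero] at this
        exact this
      refine h2.congr' ?_
      filter_upwards [eventually_ge_atTop v] with w hw
      rw [indicator_of_mem (by exact hw)]
  rw [integral_exp_mul_Ioi (by linarith)] at key
  have e : -rexp (-ν * 0) / -ν = 1 / ν := by simp [neg_div_neg_eq]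
  rw [e] at key
  refine key.congr' ?_
  filter_upwards [eventually_ge_atTop 0] with w hw
  rw [setIntegral_indicator measurableSet_Iic, Ioi_inter_Iic,
    ← intervalIntegral.integral_of_le hw, ← intervalIntegral.integral_div]
  have := intervalIntegral.integral_comp_sub_left (a := 0) (b := w)
    (fun z => exp (ν * z - h z) / exp (ν * w - h w)) w
  simp only [sub_self, sub_zero] at this
  rw [← this]
  congr 1
  ext v
  rw [← exp_sub]
  congr 1; ring

lemma aux_mvt (w p : ℝ → ℝ) (ν : ℝ) (hd : ∀ t, 0 ≤ t → HasDerivAt w (p t) t)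
    (hp : Tendsto (fun t => t * p t) atTop (nhds (1 / ν))) (ε : ℝ) (hε : 0 < ε) :
    ∃ T > 0, ∀ t ≥ T, ∀ a ≥ t, ∀ b ≥ t,
      |(w b - 1 / ν * log b) - (w a - 1 / ν * log a)| ≤ ε / t * |b - a| := by
  obtain ⟨T, hT⟩ := eventually_atTop.1 (hp.eventually (Metric.ball_mem_nhds _ hε))
  refine ⟨max T 1, by positivity, fun t ht a ha b hb => ?_⟩
  have ht0 : 0 < t := lt_of_lt_of_le one_pos ((le_max_right _ _).trans ht)
  have htT : T ≤ t := (le_max_left _ _).trans ht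
  have := Convex.norm_image_sub_le_of_norm_hasDerivWithin_le (s := Ici t) (C := ε / t)
    (f := fun t => w t - 1 / ν * log t) (f' := fun t => p t - 1 / ν * t⁻¹) (x := a) (y := b)
    (fun x hx => by
      have hx0 : 0 < x := lt_of_lt_of_le ht0 hx
      exact ((hd x hx0.le).sub ((hasDerivAt_log hx0.ne').const_mul _)).hasDerivWithinAt)
    (fun x hx => by
      have hx0 : 0 < x := lt_of_lt_of_le ht0 hx
      have h1 := hT x (htT.trans hx)
      rw [Real.dist_eq] at h1
      have : p x - 1 / ν * x⁻¹ = (x * p x - 1 / ν) / x := by field_simp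
      rw [this, Real.norm_eq_abs, abs_div, abs_of_pos hx0]
      exact div_le_div₀ hε.le h1.le ht0 hx)
    (convex_Ici t) ha hb
  simpa [Real.norm_eq_abs] using this

lemma aux_a (w p : ℝ → ℝ) (ν : ℝ) (hd : ∀ t, 0 ≤ t → HasDerivAt w (p t) t)
    (hp : Tendsto (fun t => t * p t) atTop (nhds (1 / ν))) (lam : ℝ) (hl : 0 < lam) :
    Tendsto (fun t => w (lam * t) - w t) atTop (nhds (1 / ν * log lam)) := by
  have hc : 0 < min 1 lam := lt_min one_pos hl
  set c := min 1 lam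
  rw [Metric.tendsto_atTop]
  intro ε hε
  obtain ⟨T, hT0, hT⟩ := aux_mvt w p ν hd hp (ε * c / (|lam - 1| + 1)) (by positivity)
  refine ⟨T / c, fun t ht => ?_⟩
  have ht0 : 0 < t := lt_of_lt_of_le (by positivity) ht
  have h1 := hT (c * t) (by rw [ge_iff_le, div_le_iff₀ hc] at ht; linarith)
    t (by have := mul_le_mul_of_nonneg_right (min_le_left 1 lam) ht0.le; simpa using this)
    (lam * t) (mul_le_mul_of_nonneg_right (min_le_right 1 lam) ht0.le)
  rw [Real.dist_eq]
  rw [log_mul hl.ne' ht0.ne', show lam * t - t = (lam - 1) * t by ring, abs_mul,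
    abs_of_pos ht0] at h1
  have e1 : w (lam * t) - w t - 1 / ν * log lam =
    w (lam * t) - 1 / ν * (log lam + log t) - (w t - 1 / ν * log t) := by ring
  rw [e1]
  refine h1.trans_lt ?_
  have e2 : ε * c / (|lam - 1| + 1) / (c * t) * (|lam - 1| * t) =
    ε * (|lam - 1| / (|lam - 1| + 1)) := by field_simp
  rw [e2]
  have : |lam - 1| / (|lam - 1| + 1) < 1 := by
    rw [div_lt_one (by positivity)]; linarith
  nlinarith

lemma aux_d (w p : ℝ → ℝ) (ν : ℝ) (hν : 0 < ν) (hd : ∀ t, 0 ≤ t → HasDerivAt w (p t) t)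
    (hp : Tendsto (fun t => t * p t) atTop (nhds (1 / ν)))
    (hp0 : ∀ t, 0 ≤ t → 0 ≤ p t) (m : ℝ) (hm : 0 ≤ m) :
    Tendsto (fun t => ν * t * (1 - exp (-(w (t + m) - w t)))) atTop (nhds m) := by
  have A : Tendsto (fun t => t * ((w (t + m) - 1 / ν * log (t + m)) - (w t - 1 / ν * log t)))
      atTop (nhds 0) := by
    rw [Metric.tendsto_atTop]
    intro ε hε
    obtain ⟨T, hT0, hT⟩ := aux_mvt w p ν hd hp (ε / (m + 1)) (by positivity)
    refine ⟨T, fun t ht => ?_⟩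
    have ht0 : 0 < t := lt_of_lt_of_le hT0 ht
    have h1 := hT t ht t le_rfl (t + m) (by linarith)
    rw [add_sub_cancel_left, abs_of_nonneg hm] at h1
    rw [Real.dist_eq, sub_zero, abs_mul, abs_of_pos ht0]
    have h2 := mul_le_mul_of_nonneg_left h1 ht0.le
    refine h2.trans_lt ?_
    have e2 : t * (ε / (m + 1) / t * m) = ε * (m / (m + 1)) := by field_simp
    rw [e2]
    have : m / (m + 1) < 1 := by
      rw [div_lt_one (by positivity)]; linarith
    nlinarith
  have B : Tendsto (fun t => ν * t * (w (t + m) - w t)) atTop (nhds m) := by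
    have := (A.const_mul ν).add (Real.tendsto_mul_log_one_add_div_atTop m)
    rw [mul_zero, zero_add] at this
    refine this.congr' ?_
    filter_upwards [eventually_gt_atTop 0] with t ht
    have : log (1 + m / t) = log (t + m) - log t := by
      rw [← log_div (by positivity) ht.ne']
      congr 1; field_simp
    rw [this]
    field_simp
    ring
  have D : Tendsto (fun t => w (t + m) - w t) atTop (nhds 0) := by
    have := B.mul ((tendsto_inv_atTop_zero (𝕜 := ℝ)).const_mul (1 / ν))
    rw [mul_zero, mul_zero] at this
    refine this.congr' ?_
    filter_upwards [eventually_gt_atTop 0] with t ht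
    field_simp
  have D0 : ∀ t, 0 ≤ t → 0 ≤ w (t + m) - w t := by
    intro t ht
    have : MonotoneOn w (Ici 0) := by
      refine monotoneOn_of_deriv_nonneg (convex_Ici 0)
        (fun x hx => (hd x hx).continuousAt.continuousWithinAt)
        (fun x hx => ?_) (fun x hx => ?_)
      · rw [interior_Ici] at hx
        exact (hd x (le_of_lt hx)).differentiableAt.differentiableWithinAt
      · rw [interior_Ici] at hx
        rw [(hd x (le_of_lt hx)).deriv]; exact hp0 x (le_of_lt hx)
    have := this (show t ∈ Ici 0 from ht) (show t + m ∈ Ici 0 from add_nonneg ht hm) (by linarith)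
    linarith
  have L : Tendsto (fun t => ν * t * (w (t + m) - w t) * (1 - (w (t + m) - w t))) atTop (nhds m) := by
    have := B.mul (D.const_sub 1)
    simpa using this
  refine tendsto_of_tendsto_of_tendsto_of_le_of_le' L B ?_ ?_
  · filter_upwards [eventually_gt_atTop 0, D.eventually (Metric.ball_mem_nhds 0 one_pos)] with t ht h1
    have d0 := D0 t ht.le
    rw [Real.dist_eq, sub_zero, abs_of_nonneg d0] at h1
    set d := w (t + m) - w t
    rw [mul_assoc]
    refine mul_le_mul_of_nonneg_left ?_ (by positivity)
    have : exp (-d) ≤ 1 / (1 + d) := by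
      rw [exp_neg, ← one_div]
      exact one_div_le_one_div_of_le (by linarith) (by linarith [add_one_le_exp d])
    have : 1 / (1 + d) ≤ 1 - d * (1 - d) := by
      rw [div_le_iff₀ (by linarith)]
      nlinarith [mul_nonneg d0 (mul_nonneg d0 d0)]
    linarith
  · filter_upwards [eventually_gt_atTop 0] with t ht
    refine mul_le_mul_of_nonneg_left ?_ (by positivity)
    linarith [add_one_le_exp (-(w (t + m) - w t))]

theorem stmt5
    (ν : ℝ) (hν0 : 0 < ν) (hν1 : ν < 1)
    (𝓛 : ℝ → ℝ)
    (h𝓛pos : ∀ x ∈ Ici (1:ℝ), 0 < 𝓛 x)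
    (h𝓛cont : ContinuousOn 𝓛 (Ici 1))
    (h𝓛sv : ∀ lam > (0:ℝ), Tendsto (fun x => 𝓛 (lam * x) / 𝓛 x) atTop (nhds 1))
    (F : ℝ → ℝ → ℝ)
    (hFmem : ∀ s ∈ Ico (0:ℝ) 1, ∀ t : ℝ, 0 ≤ t → s ≤ F t s ∧ F t s < 1)
    (hF0 : ∀ s ∈ Ico (0:ℝ) 1, F 0 s = s)
    (hFode : ∀ s ∈ Ico (0:ℝ) 1, ∀ t : ℝ, 0 ≤ t →
      HasDerivAt (fun u => F u s)
        ((1 - F t s) ^ (1 + ν) * 𝓛 (1 / (1 - F t s))) t)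
 :
    (∀ lam > (0:ℝ),
      Tendsto (fun t => ((ν * (lam * t)) ^ (1 / ν) * (1 - F (lam * t) 0)) / ((ν * t) ^ (1 / ν) * (1 - F t 0))) atTop (nhds 1)) ∧
    Tendsto (fun t => ((ν * t) ^ (1 / ν) * (1 - F t 0)) ^ ν * 𝓛 ((ν * t) ^ (1 / ν) / ((ν * t) ^ (1 / ν) * (1 - F t 0)))) atTop (nhds 1) ∧
    (∀ t : ℝ, 0 < t → ν * t * (1 - (1 - F t 0) / (1 - F t 0)) = 0) ∧
    (∀ s ∈ Ico (0:ℝ) 1,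
      Tendsto (fun t => (ν * t * (1 - (1 - F t s) / (1 - F t 0)))) atTop
        (nhds (∫ x in (1:ℝ)..(1 / (1 - s)), 1 / (x ^ (1 - ν) * 𝓛 x)))) := by
  have hexp1 : ∀ z : ℝ, exp (max z 0) ∈ Ici (1:ℝ) := fun z => one_le_exp (le_max_right _ _)
  obtain ⟨h, hh⟩ : ∃ h : ℝ → ℝ, ∀ z, h z = log (𝓛 (exp (max z 0))) := ⟨_, fun _ => rfl⟩
  have hc : Continuous h := by
    have : h = fun z => log (𝓛 (exp (max z 0))) := funext hh
    rw [this]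
    refine Continuous.log ?_ (fun z => (h𝓛pos _ (hexp1 z)).ne')
    exact h𝓛cont.comp_continuous (by fun_prop) hexp1
  have hs : ∀ u, Tendsto (fun x => h (x + u) - h x) atTop (nhds 0) := by
    intro u
    have h1 := (h𝓛sv (exp u) (exp_pos u)).comp tendsto_exp_atTop
    have h2 := (continuousAt_log one_ne_zero).tendsto.comp h1
    rw [log_one] at h2
    refine h2.congr' ?_
    filter_upwards [eventually_ge_atTop 0, eventually_ge_atTop (-u)] with x hx hxu
    have p1 := h𝓛pos _ (hexp1 (x + u))
    have p2 := h𝓛pos _ (hexp1 x)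
    rw [hh, hh]
    rw [max_eq_left (by linarith)] at p1 ⊢
    rw [max_eq_left hx] at p2 ⊢
    simp only [Function.comp]
    rw [← exp_add, add_comm u x, log_div p1.ne' p2.ne']
  have kar := aux_karamata h hc hs ν hν0
  obtain ⟨k, hk⟩ : ∃ k : ℝ → ℝ, ∀ z, k z = exp (ν * z - h z) := ⟨_, fun _ => rfl⟩
  have hkf : (fun z => exp (ν * z - h z)) = k := funext fun z => (hk z).symm
  have hkc : Continuous k := by rw [← hkf]; fun_prop
  have hkpos : ∀ z, 0 < k z := fun z => by rw [hk]; exact exp_pos _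
  obtain ⟨K, hK⟩ : ∃ K : ℝ → ℝ, ∀ z, K z = ∫ x in (0:ℝ)..z, k x := ⟨_, fun _ => rfl⟩
  have hKd : ∀ z, HasDerivAt K (k z) z := by
    intro z
    rw [funext hK]
    exact hkc.integral_hasStrictDerivAt 0 z |>.hasDerivAt
  have hKmono : StrictMono K := by
    apply strictMono_of_deriv_pos
    intro z; rw [(hKd z).deriv]; exact hkpos z
  have hK0 : K 0 = 0 := by rw [hK]; simp
  have kar' : Tendsto (fun w => K w / k w) atTop (nhds (1 / ν)) := by
    refine kar.congr fun w => ?_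
    rw [hkf, hK, hk]
  have hkr : ∀ r : ℝ, 0 < r → r ≤ 1 → k (-log r) = 1 / (r ^ ν * 𝓛 (1 / r)) := by
    intro r hr hr1
    have hl : 0 ≤ -log r := by have := log_nonpos hr.le hr1; linarith
    have hp : 0 < 𝓛 (1 / r) := h𝓛pos _ (by rw [mem_Ici, le_div_iff₀ hr]; linarith)
    rw [hk, hh, max_eq_left hl, exp_neg (log r), exp_log hr, ← one_div, exp_sub, exp_log hp,
      rpow_def_of_pos hr, mul_neg, exp_neg, mul_comm ν]
    field_simp
  obtain ⟨W, hW⟩ : ∃ W : ℝ → ℝ → ℝ, ∀ s t, W s t = -log (1 - F t s) := ⟨_, fun _ _ => rfl⟩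
  have hR : ∀ s ∈ Ico (0:ℝ) 1, ∀ t, 0 ≤ t → 0 < 1 - F t s ∧ 1 - F t s ≤ 1 := by
    intro s hs t ht
    have := hFmem s hs t ht
    exact ⟨by linarith, by linarith [hs.1]⟩
  have hRW : ∀ s ∈ Ico (0:ℝ) 1, ∀ t, 0 ≤ t → 1 - F t s = exp (-W s t) := by
    intro s hs t ht
    rw [hW, neg_neg, exp_log (hR s hs t ht).1]
  have hWd : ∀ s ∈ Ico (0:ℝ) 1, ∀ t, 0 ≤ t → HasDerivAt (W s) (1 / k (W s t)) t := by
    intro s hs t ht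
    obtain ⟨r0, r1⟩ := hR s hs t ht
    have h1 := (((hFode s hs t ht).const_sub 1).log r0.ne').neg
    have e : W s = fun t => -log (1 - F t s) := funext (hW s)
    rw [e]
    refine h1.congr_deriv ?_
    simp only
    rw [hkr _ r0 r1, rpow_add r0, rpow_one]
    field_simp
  have hKW : ∀ s ∈ Ico (0:ℝ) 1, ∀ t, 0 ≤ t → K (W s t) = t + K (W s 0) := by
    intro s hs t ht
    have hd : ∀ x, 0 ≤ x → HasDerivAt (fun x => K (W s x) - x) 0 x := by
      intro x hx
      have := ((hKd (W s x)).comp x (hWd s hs x hx)).sub (hasDerivAt_id x)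
      refine this.congr_deriv ?_
      have := (hkpos (W s x)).ne'
      field_simp
      ring
    have := constant_of_has_deriv_right_zero (a := 0) (b := t) (f := fun x => K (W s x) - x)
      (fun x hx => (hd x hx.1).continuousAt.continuousWithinAt)
      (fun x hx => (hd x hx.1).hasDerivWithinAt) t ⟨ht, le_rfl⟩
    linarith
  have z0 : (0:ℝ) ∈ Ico (0:ℝ) 1 := ⟨le_rfl, one_pos⟩
  have hW00 : W 0 0 = 0 := by rw [hW, hF0 0 z0]; simp
  have hKW0 : ∀ t, 0 ≤ t → K (W 0 t) = t := by
    intro t ht; rw [hKW 0 z0 t ht, hW00, hK0, add_zero]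
  have hWtop : Tendsto (W 0) atTop atTop := by
    rw [tendsto_atTop]
    intro B
    filter_upwards [eventually_ge_atTop 0, eventually_ge_atTop (K B)] with t ht htB
    rw [← hKW0 t ht] at htB
    exact hKmono.le_iff_le.1 htB
  have hp : Tendsto (fun t => t * (1 / k (W 0 t))) atTop (nhds (1 / ν)) := by
    refine (kar'.comp hWtop).congr' ?_
    filter_upwards [eventually_ge_atTop 0] with t ht
    simp only [Function.comp]
    rw [hKW0 t ht]; ring
  refine ⟨?_, ?_, ?_, ?_⟩
  · intro lam hl
    have h1 := aux_a (W 0) _ ν (hWd 0 z0) hp lam hl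
    have h2 := (continuous_exp.tendsto _).comp (h1.const_sub (1 / ν * log lam))
    rw [sub_self, exp_zero] at h2
    refine h2.congr' ?_
    filter_upwards [eventually_gt_atTop 0] with t ht
    simp only [Function.comp]
    rw [hRW 0 z0 t ht.le, hRW 0 z0 (lam * t) (by positivity),
      rpow_def_of_pos (by positivity), rpow_def_of_pos (by positivity),
      ← exp_add, ← exp_add, ← exp_sub, log_mul hν0.ne' (by positivity),
      log_mul hl.ne' ht.ne', log_mul hν0.ne' ht.ne']
    congr 1
    ring
  · have h1 := hp.const_mul ν
    rw [mul_one_div_cancel hν0.ne'] at h1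
    refine h1.congr' ?_
    filter_upwards [eventually_gt_atTop 0] with t ht
    obtain ⟨r0, r1⟩ := hR 0 z0 t ht.le
    have hq : 0 < (ν * t) ^ (1 / ν) := by positivity
    rw [hW, hkr _ r0 r1, mul_rpow hq.le r0.le, ← rpow_mul (by positivity),
      one_div_mul_cancel hν0.ne', rpow_one]
    have e : (ν * t) ^ (1 / ν) / ((ν * t) ^ (1 / ν) * (1 - F t 0)) = 1 / (1 - F t 0) := by
      field_simp
    rw [e, one_div_one_div]
    ring
  · intro t ht
    rw [div_self (hR 0 z0 t ht.le).1.ne']; ring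
  · intro s hs
    have hs0 : 0 < 1 - s := by linarith [hs.2]
    have hWs : W s 0 = -log (1 - s) := by rw [hW, hF0 s hs]
    have hWs0 : 0 ≤ W s 0 := by
      rw [hWs]; have := log_nonpos hs0.le (by linarith [hs.1]); linarith
    have hm : 0 ≤ K (W s 0) := hK0.ge.trans (hKmono.monotone hWs0)
    have hI : (∫ x in (1:ℝ)..(1 / (1 - s)), 1 / (x ^ (1 - ν) * 𝓛 x)) = K (W s 0) := by
      have e1 : (1:ℝ) / (1 - s) = exp (W s 0) := by
        rw [hWs, exp_neg, exp_log hs0, one_div]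
      have := intervalIntegral.integral_comp_mul_deriv' (a := 0) (b := W s 0) (f := exp)
        (f' := exp) (g := fun x => 1 / (x ^ (1 - ν) * 𝓛 x))
        (fun x _ => hasDerivAt_exp x) continuous_exp.continuousOn (by
          have sub : exp '' uIcc 0 (W s 0) ⊆ Ici 1 := by
            rintro _ ⟨x, hx, rfl⟩
            rw [uIcc_of_le hWs0] at hx
            exact one_le_exp hx.1
          refine ContinuousOn.mono ?_ sub
          refine continuousOn_const.div ((continuousOn_id.rpow_const ?_).mul h𝓛cont) ?_
          · intro x hx
            left
            have : (1:ℝ) ≤ x := hx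
            simp only [id]
            linarith
          · intro x hx
            have h1 : (1:ℝ) ≤ x := hx
            have h2 := h𝓛pos x hx
            have h3 : 0 < x ^ (1 - ν) := rpow_pos_of_pos (by linarith) _
            exact (mul_pos h3 h2).ne')
      rw [exp_zero] at this
      rw [e1, ← this, hK]
      refine intervalIntegral.integral_congr fun x hx => ?_
      rw [uIcc_of_le hWs0] at hx
      have h4 := hkr (exp (-x)) (exp_pos _) (exp_le_one_iff.2 (by linarith [hx.1]))
      have h5 : (1:ℝ) / exp (-x) = exp x := by rw [exp_neg, one_div, inv_inv]
      rw [log_exp, neg_neg, h5, ← exp_mul] at h4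
      simp only [Function.comp]
      have hp : 0 < 𝓛 (exp x) := h𝓛pos _ (one_le_exp hx.1)
      rw [h4, ← exp_mul]
      have : exp (-x * ν) = exp (x * (1 - ν)) / exp x := by rw [← exp_sub]; congr 1; ring
      rw [this]
      field_simp
    rw [hI]
    have hd := aux_d (W 0) _ ν hν0 (hWd 0 z0) hp
      (fun t _ => (one_div_pos.2 (hkpos _)).le) (K (W s 0)) hm
    refine hd.congr' ?_
    filter_upwards [eventually_ge_atTop 0] with t ht
    have e : W s t = W 0 (t + K (W s 0)) := by
      apply hKmono.injective
      rw [hKW s hs t ht, hKW0 _ (by linarith)]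
    rw [hRW s hs t ht, hRW 0 z0 t ht, e, ← exp_sub]
    congr 3
    ring
end

section
/- Let σ>0. If L is slowly varying at infinity with remainder r, then the integral ∫_t^∞ y^{−(1+σ)}·L(y) dy converges for all large t and, as t→∞, ∫_t^∞ y^{−(1+σ)}·L(y) dy = (L(t)/σ)·t^{−σ}·(1+O(r(t))). -/
open Real Filter Asymptotics Set MeasureTheory

lemma aux_meas (f g : ℝ → ℝ) (a : ℝ) (hf : Measurable f)
    (hg : ∀ u ≥ a, 0 < g u)
    (hO : ∀ h ≥ (0:ℝ), (fun u => f (u + h) - f u) =O[atTop] g)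
    (u : ℕ → ℝ) (hua : ∀ n, a ≤ u n) (hu : Tendsto u atTop atTop) :
    ∀ᶠ n : ℕ in atTop, (3/2 : ENNReal) <
      volume {v : ℝ | v ∈ Icc (0:ℝ) 2 ∧ ∀ m ≥ n, |f (u m + v) - f (u m)| ≤ n * g (u m)} := by
  set V : ℕ → Set ℝ := fun n =>
    {v : ℝ | v ∈ Icc (0:ℝ) 2 ∧ ∀ m ≥ n, |f (u m + v) - f (u m)| ≤ n * g (u m)} with hV
  have hmono : Monotone V := by
    intro n k hnk v hv
    refine ⟨hv.1, fun m hm => (hv.2 m (hnk.trans hm)).trans ?_⟩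
    have := hg _ (hua m)
    have : (n:ℝ) ≤ k := by exact_mod_cast hnk
    gcongr
  have hun : ⋃ n, V n = Icc (0:ℝ) 2 := by
    apply subset_antisymm
    · exact iUnion_subset fun n v hv => hv.1
    · intro v hv
      obtain ⟨C, hC⟩ := (hO v hv.1).bound
      have h2 := hu.eventually hC
      obtain ⟨N, hN⟩ := eventually_atTop.1 h2
      obtain ⟨M, hM⟩ := exists_nat_ge C
      refine mem_iUnion.2 ⟨max N M, hv, fun m hm => ?_⟩
      have h3 := hN m ((le_max_left _ _).trans hm)
      have hp := hg _ (hua m)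
      rw [Real.norm_eq_abs, Real.norm_eq_abs, abs_of_pos hp] at h3
      refine h3.trans ?_
      have : C ≤ ((max N M : ℕ) : ℝ) := hM.trans (by exact_mod_cast le_max_right _ _)
      gcongr
  have ht := tendsto_measure_iUnion_atTop (μ := volume) hmono
  rw [hun, Real.volume_Icc] at ht
  refine ht.eventually (lt_mem_nhds ?_)
  rw [ENNReal.lt_ofReal_iff_toReal_lt]
  · norm_num
  · exact ENNReal.div_ne_top (by norm_num) (by norm_num)

lemma uct (f g : ℝ → ℝ) (a : ℝ) (hf : Measurable f)
    (hg : ∀ u ≥ a, 0 < g u) (hanti : AntitoneOn g (Ici a))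
    (hO : ∀ h ≥ (0:ℝ), (fun u => f (u + h) - f u) =O[atTop] g) :
    ∃ K : ℝ, ∀ᶠ u in atTop, ∀ h ∈ Icc (0:ℝ) 1, |f (u + h) - f u| ≤ K * g u := by
  by_contra hcon
  have hex : ∀ n : ℕ, ∃ u : ℝ, max a n ≤ u ∧ ∃ h ∈ Icc (0:ℝ) 1, n * g u < |f (u + h) - f u| := by
    intro n
    by_contra hc
    apply hcon
    refine ⟨n, ?_⟩
    filter_upwards [eventually_ge_atTop (max a n)] with u hu h hh
    by_contra hlt
    exact hc ⟨u, hu, h, hh, not_le.1 hlt⟩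
  choose u hu h hh hlt using hex
  have hua : ∀ n, a ≤ u n := fun n => (le_max_left _ _).trans (hu n)
  have hut : Tendsto u atTop atTop :=
    tendsto_atTop_mono (fun n => (le_max_right _ _).trans (hu n)) tendsto_natCast_atTop_atTop
  have hwa : ∀ n, a ≤ u n + h n := fun n => by linarith [hua n, (hh n).1]
  have hwt : Tendsto (fun n => u n + h n) atTop atTop :=
    tendsto_atTop_mono (fun n => by linarith [(hh n).1]) hut
  obtain ⟨n, hn1, hn2⟩ := ((aux_meas f g a hf hg hO u hua hut).and
    (aux_meas f g a hf hg hO _ hwa hwt)).exists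
  set V := {v : ℝ | v ∈ Icc (0:ℝ) 2 ∧ ∀ m ≥ n, |f (u m + v) - f (u m)| ≤ n * g (u m)}
  set W := {v : ℝ | v ∈ Icc (0:ℝ) 2 ∧ ∀ m ≥ n,
    |f (u m + h m + v) - f (u m + h m)| ≤ n * g (u m + h m)} with hW
  have hWm : MeasurableSet W := by
    have : W = Icc (0:ℝ) 2 ∩ ⋂ m : ℕ, ⋂ _ : m ≥ n, {v : ℝ |
        |f (u m + h m + v) - f (u m + h m)| ≤ n * g (u m + h m)} := by
      ext v; simp [hW]
    rw [this]
    refine measurableSet_Icc.inter (MeasurableSet.iInter fun m => MeasurableSet.iInter fun _ => ?_)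
    exact measurableSet_le (by fun_prop) measurable_const
  set m := 2 * n with hm
  have hnm : n ≤ m := by omega
  set W' := (fun v => v + (- h m)) ⁻¹' W with hW'
  have hW'm : MeasurableSet W' := (measurable_add_const _) hWm
  have hvol : volume W' = volume W := measure_preimage_add_right _ _ _
  have hne : ¬ Disjoint V W' := by
    intro hd
    have h1 := measure_union (μ := volume) hd hW'm
    have h2 : V ∪ W' ⊆ Icc (0:ℝ) 3 := by
      have := hh m
      rintro v (hv | hv)
      · exact ⟨hv.1.1, by linarith [hv.1.2]⟩
      · have := hv.1
        simp only [mem_Icc] at *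
        constructor <;> linarith
    have h3 := measure_mono (μ := volume) h2
    rw [h1, hvol, Real.volume_Icc] at h3
    have h4 := ENNReal.add_lt_add hn1 hn2
    have h5 : (3/2 : ENNReal) + 3/2 = ENNReal.ofReal (3 - 0) := by
      rw [ENNReal.add_halves]; norm_num
    rw [h5] at h4
    exact absurd (h4.trans_le h3) (lt_irrefl _)
  obtain ⟨v, hv, hw⟩ := not_disjoint_iff.1 hne
  have e1 := hv.2 m hnm
  have e2 := hw.2 m hnm
  have e3 : u m + h m + (v + -h m) = u m + v := by ring
  rw [e3] at e2
  have e4 := hlt m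
  have e5 : g (u m + h m) ≤ g (u m) := hanti (hua m) (hwa m) (by linarith [(hh m).1])
  have e6 : (n:ℝ) * g (u m + h m) ≤ n * g (u m) := by gcongr
  have e7 : (m:ℝ) = 2 * n := by rw [hm]; push_cast; ring
  rw [e7] at e4
  have e8 := abs_sub_le (f (u m + h m)) (f (u m + v)) (f (u m))
  rw [abs_sub_comm (f (u m + h m)) (f (u m + v))] at e8
  linarith

lemma potter (F g : ℝ → ℝ) (a τ K q C : ℝ) (hτ : 0 < τ) (hK : 0 ≤ K) (hq : 0 ≤ q)
    (hF : ∀ u ≥ a, 0 < F u) (hg : ∀ u ≥ a, 0 < g u) (hanti : AntitoneOn g (Ici a))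
    (h1 : ∀ u ≥ a, ∀ h ∈ Icc (0:ℝ) 1, |F (u + h) - F u| ≤ K * g u * F u)
    (h2 : ∀ u ≥ a, F (u + 1) ≤ q * F u)
    (hC : K ≤ C) (hCq : C * (q * exp (-τ)) + K ≤ C) (n : ℕ) :
    ∀ u ≥ a, ∀ h ∈ Icc (0:ℝ) (n + 1), |F (u + h) - F u| ≤ C * g u * F u * exp (τ * h) := by
  have base : ∀ u ≥ a, ∀ h ∈ Icc (0:ℝ) 1, |F (u + h) - F u| ≤ C * g u * F u * exp (τ * h) := by
    intro u hu h hh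
    have := hF u hu
    have := hg u hu
    have he : 1 ≤ exp (τ * h) := one_le_exp (mul_nonneg hτ.le hh.1)
    calc _ ≤ K * g u * F u := h1 u hu h hh
      _ ≤ C * g u * F u := by gcongr
      _ ≤ _ := le_mul_of_one_le_right (by have := hK.trans hC; positivity) he
  induction n with
  | zero => simpa using base
  | succ n ih =>
    intro u hu h hh
    rcases le_total h 1 with hle | hle
    · exact base u hu h ⟨hh.1, hle⟩
    have hFu := hF u hu
    have hgu := hg u hu
    have hu1 : u + 1 ≥ a := by linarith
    have i1 := ih (u + 1) hu1 (h - 1) ⟨by linarith, by have := hh.2; push_cast at this; linarith⟩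
    have i2 := h1 u hu 1 ⟨by norm_num, le_rfl⟩
    rw [show u + 1 + (h - 1) = u + h by ring] at i1
    have i3 : g (u + 1) ≤ g u := hanti hu hu1 (by linarith)
    have i4 := h2 u hu
    have hC0 := hK.trans hC
    have hg1 := hg _ hu1
    have hF1 := hF _ hu1
    have he : 1 ≤ exp (τ * h) := one_le_exp (mul_nonneg hτ.le hh.1)
    have i5 : exp (τ * (h - 1)) = exp (-τ) * exp (τ * h) := by
      rw [← exp_add]; congr 1; ring
    calc |F (u + h) - F u| ≤ |F (u + h) - F (u + 1)| + |F (u + 1) - F u| := abs_sub_le _ _ _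
      _ ≤ C * g (u + 1) * F (u + 1) * exp (τ * (h - 1)) + K * g u * F u := add_le_add i1 i2
      _ ≤ C * g u * (q * F u) * exp (τ * (h - 1)) + K * g u * F u * exp (τ * h) := by
        apply add_le_add
        · gcongr
        · exact le_mul_of_one_le_right (by positivity) he
      _ = (C * (q * exp (-τ)) + K) * (g u * F u * exp (τ * h)) := by rw [i5]; ring
      _ ≤ C * (g u * F u * exp (τ * h)) := by gcongr
      _ = _ := by ring

/-- global bound -/
lemma global_bound
    (τ c : ℝ) (hτ : 0 < τ) (hc : 0 < c)
    (L r : ℝ → ℝ)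
    (hLmeas : Measurable L)
    (hLpos : ∀ x ∈ Ici c, 0 < L x)
    (hrpos : ∀ x ∈ Ici c, 0 < r x)
    (hrdec : AntitoneOn r (Ici c))
    (hr0 : Tendsto r atTop (nhds 0))
    (hLsv : ∀ lam > (0:ℝ), Tendsto (fun x => L (lam * x) / L x) atTop (nhds 1))
    (hLrem : ∀ lam > (0:ℝ), (fun x => L (lam * x) / L x - 1) =O[atTop] r) :
    ∃ C > 0, ∃ T ≥ c, ∀ t ≥ T, ∀ y ≥ t, |L y - L t| ≤ C * r t * L t * (y / t) ^ τ := by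
  set F : ℝ → ℝ := fun u => L (exp u) with hFdef
  set g : ℝ → ℝ := fun u => r (exp u) with hgdef
  set f : ℝ → ℝ := fun u => log (F u) with hfdef
  set a := log c with ha
  have hce : ∀ u ≥ a, c ≤ exp u := fun u hu => (log_le_iff_le_exp hc).1 hu
  have hF : ∀ u ≥ a, 0 < F u := fun u hu => hLpos _ (hce u hu)
  have hg : ∀ u ≥ a, 0 < g u := fun u hu => hrpos _ (hce u hu)
  have hanti : AntitoneOn g (Ici a) := fun u hu v hv huv =>
    hrdec (hce u hu) (hce v hv) (exp_le_exp.2 huv)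
  have hg0 : Tendsto g atTop (nhds 0) := hr0.comp tendsto_exp_atTop
  have hf : Measurable f := by
    exact measurable_log.comp (hLmeas.comp measurable_exp)
  have hshift : ∀ h u, F (u + h) = L (exp h * exp u) := by
    intro h u; rw [hFdef]; simp only; rw [← exp_add, add_comm]
  have hO : ∀ h ≥ (0:ℝ), (fun u => f (u + h) - f u) =O[atTop] g := by
    intro h hh
    have A := (hLrem (exp h) (exp_pos h)).comp_tendsto tendsto_exp_atTop
    have B := (hLsv (exp h) (exp_pos h)).comp tendsto_exp_atTop
    refine IsBigO.trans (IsBigO.of_bound 2 ?_) A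
    have B' : ∀ᶠ u in atTop, (1/2:ℝ) < L (exp h * exp u) / L (exp u) :=
      B.eventually (lt_mem_nhds (by norm_num))
    filter_upwards [B', eventually_ge_atTop a] with u hu hua
    have p1 := hF u hua
    have p2 := hF (u + h) (by linarith)
    have e : f (u + h) - f u = log (L (exp h * exp u) / L (exp u)) := by
      rw [hfdef]; simp only
      rw [← log_div p2.ne' p1.ne', hshift]
    rw [e]
    simp only [Function.comp, Real.norm_eq_abs]
    set x := L (exp h * exp u) / L (exp u)
    have hx : 0 < x := by linarith
    have l1 := log_le_sub_one_of_pos hx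
    have l2 := one_sub_inv_le_log_of_pos hx
    have l3 : 1 - x⁻¹ = (x - 1) * x⁻¹ := by field_simp
    have l4 : x⁻¹ ≤ 2 := by
      rw [inv_le_comm₀ hx (by norm_num)]; linarith
    have l5 : 0 < x⁻¹ := by positivity
    rw [l3] at l2
    have l6 : |(x - 1) * x⁻¹| ≤ 2 * |x - 1| := by
      rw [abs_mul, abs_of_pos l5, mul_comm]; gcongr
    have l7 := (abs_le.1 l6).1
    rw [abs_le]
    constructor
    · linarith
    · linarith [le_abs_self (x - 1), abs_nonneg (x-1)]
  obtain ⟨K0, hK0⟩ := uct f g a hf hg hanti hO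
  set K1 := max K0 0 with hK1
  have hK1n : 0 ≤ K1 := le_max_right _ _
  set q := exp (τ / 2) with hq
  have hq1 : 1 < q := by rw [hq]; exact one_lt_exp_iff.2 (by linarith)
  have hsm : ∀ᶠ u in atTop, K1 * g u < 1 ∧ 2 * K1 * g u < q - 1 := by
    have t1 : Tendsto (fun u => K1 * g u) atTop (nhds 0) := by simpa using hg0.const_mul K1
    have t2 : Tendsto (fun u => 2 * K1 * g u) atTop (nhds 0) := by
      simpa using hg0.const_mul (2 * K1)
    exact (t1.eventually (gt_mem_nhds (by norm_num))).and
      (t2.eventually (gt_mem_nhds (by linarith)))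
  obtain ⟨b, hb⟩ := eventually_atTop.1 (hK0.and (hsm.and (eventually_ge_atTop a)))
  set b' := max a b
  have hab : a ≤ b' := le_max_left _ _
  have hbb : b ≤ b' := le_max_right _ _
  have h1 : ∀ u ≥ b', ∀ h ∈ Icc (0:ℝ) 1, |F (u + h) - F u| ≤ 2 * K1 * g u * F u := by
    intro u hu h hh
    obtain ⟨k1, ⟨k2, -⟩, k3⟩ := hb u (hbb.trans hu)
    have p1 := hF u k3
    have p2 := hF (u + h) (by linarith [hh.1])
    have pg := hg u k3
    have k4 : |f (u + h) - f u| ≤ K1 * g u := (k1 h hh).trans (by gcongr; exact le_max_left _ _)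
    have k5 : F (u + h) = F u * exp (f (u + h) - f u) := by
      rw [hfdef]; simp only; rw [exp_sub, exp_log p1, exp_log p2]; field_simp
    have k6 := Real.abs_exp_sub_one_le (k4.trans k2.le)
    rw [k5, show F u * exp (f (u + h) - f u) - F u = (exp (f (u + h) - f u) - 1) * F u by ring,
      abs_mul, abs_of_pos p1]
    gcongr
    linarith
  have h2 : ∀ u ≥ b', F (u + 1) ≤ q * F u := by
    intro u hu
    have k := (abs_le.1 (h1 u hu 1 ⟨by norm_num, le_rfl⟩)).2
    obtain ⟨-, ⟨-, k2⟩, k3⟩ := hb u (hbb.trans hu)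
    have := mul_le_mul_of_nonneg_right k2.le (hF u k3).le
    linarith
  have hp : q * exp (-τ) < 1 := by
    rw [hq, ← exp_add, exp_lt_one_iff]; linarith
  have hp0 : 0 < q * exp (-τ) := by positivity
  set p := q * exp (-τ) with hpd
  set C := (2 * K1 + 1) / (1 - p) with hCd
  have h1p : 0 < 1 - p := by linarith
  have hCm : C * (1 - p) = 2 * K1 + 1 := by rw [hCd]; field_simp
  have hCpos : 0 < C := by positivity
  have hCp : 0 < C * p := by positivity
  refine ⟨C, hCpos, exp b', hce _ hab, ?_⟩
  intro t ht y hy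
  have ht0 : 0 < t := (exp_pos _).trans_le ht
  have hy0 : 0 < y := ht0.trans_le hy
  have hyt : 1 ≤ y / t := by rwa [one_le_div ht0]
  obtain ⟨n, hn⟩ := exists_nat_ge (log (y / t))
  have := potter F g b' τ (2 * K1) q C hτ (by positivity) (by positivity)
    (fun u hu => hF u (hab.trans hu)) (fun u hu => hg u (hab.trans hu))
    (hanti.mono (Ici_subset_Ici.2 hab)) h1 h2 (by nlinarith) (by nlinarith) n
    (log t) ((le_log_iff_exp_le ht0).2 ht) (log (y / t)) ⟨log_nonneg hyt, by linarith⟩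
  rw [← log_mul ht0.ne' (by positivity), mul_div_cancel₀ _ ht0.ne'] at this
  simp only [hFdef, hgdef, exp_log ht0, exp_log hy0] at this
  rwa [rpow_def_of_pos (by positivity), mul_comm (log _)]


theorem stmt8
    (σ c : ℝ) (hσ : 0 < σ) (hc : 0 < c)
    (L r : ℝ → ℝ)
    (hLmeas : Measurable L)
    (hLpos : ∀ x ∈ Ici c, 0 < L x)
    (hLloc : LocallyIntegrableOn L (Ici c))
    (hrpos : ∀ x ∈ Ici c, 0 < r x)
    (hrdec : AntitoneOn r (Ici c))
    (hr0 : Tendsto r atTop (nhds 0))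
    (hLsv : ∀ lam > (0:ℝ), Tendsto (fun x => L (lam * x) / L x) atTop (nhds 1))
    (hLrem : ∀ lam > (0:ℝ), (fun x => L (lam * x) / L x - 1) =O[atTop] r)
 :
    (∀ᶠ t in atTop, IntegrableOn (fun y => y ^ (-(1 + σ)) * L y) (Ioi t)) ∧
    ∃ E : ℝ → ℝ, E =O[atTop] r ∧
      ∀ᶠ t in atTop,
        ∫ y in Ioi t, y ^ (-(1 + σ)) * L y =
          L t / σ * t ^ (-σ) * (1 + E t) := by
  obtain ⟨C, hC, T, hT, hb⟩ := global_bound (σ/2) c (by positivity) hc L r hLmeas hLpos hrpos hrdec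
    hr0 hLsv hLrem
  have key : ∀ t ≥ T, IntegrableOn (fun y => y ^ (-(1 + σ)) * L y) (Ioi t) ∧
      |(∫ y in Ioi t, y ^ (-(1 + σ)) * L y) - L t / σ * t ^ (-σ)| ≤
        2 * C * r t * (L t / σ * t ^ (-σ)) := by
    intro t ht
    have htc : c ≤ t := hT.trans ht
    have ht0 : 0 < t := hc.trans_le htc
    have hLt := hLpos t htc
    have hrt := hrpos t htc
    have i1 : IntegrableOn (fun y : ℝ => y ^ (-(1 + σ))) (Ioi t) :=
      integrableOn_Ioi_rpow_of_lt (by linarith) ht0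
    have i2 : IntegrableOn (fun y : ℝ => y ^ (-(1 + σ / 2))) (Ioi t) :=
      integrableOn_Ioi_rpow_of_lt (by linarith) ht0
    have v1 : ∫ y in Ioi t, y ^ (-(1 + σ)) = t ^ (-σ) / σ := by
      rw [integral_Ioi_rpow_of_lt (by linarith) ht0, show -(1 + σ) + 1 = -σ by ring]
      field_simp
    have v2 : ∫ y in Ioi t, y ^ (-(1 + σ / 2)) = t ^ (-(σ / 2)) / (σ / 2) := by
      rw [integral_Ioi_rpow_of_lt (by linarith) ht0, show -(1 + σ / 2) + 1 = -(σ / 2) by ring]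
      field_simp
    set B := C * r t * L t * t ^ (-(σ / 2)) with hB
    have hbd : ∀ y ∈ Ioi t, ‖y ^ (-(1 + σ)) * (L y - L t)‖ ≤ B * y ^ (-(1 + σ / 2)) := by
      intro y hy
      have hy0 : 0 < y := ht0.trans hy
      have := hb t ht y (le_of_lt hy)
      rw [norm_mul, Real.norm_eq_abs, Real.norm_eq_abs, abs_of_pos (rpow_pos_of_pos hy0 _)]
      calc _ ≤ y ^ (-(1 + σ)) * (C * r t * L t * (y / t) ^ (σ / 2)) := by gcongr
        _ = C * r t * L t * t ^ (-(σ / 2)) * (y ^ (-(1 + σ)) * y ^ (σ / 2)) := by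
          rw [div_rpow hy0.le ht0.le, rpow_neg ht0.le]; ring
        _ = _ := by
          rw [← rpow_add hy0, show -(1 + σ) + σ / 2 = -(1 + σ / 2) by ring]
    have hbd' := (ae_restrict_iff' (μ := volume) measurableSet_Ioi).2 (Eventually.of_forall hbd)
    have i3 : IntegrableOn (fun y => y ^ (-(1 + σ)) * (L y - L t)) (Ioi t) :=
      Integrable.mono' (i2.const_mul B) (by
        apply Measurable.aestronglyMeasurable; fun_prop) hbd'
    have hsplit : (fun y => y ^ (-(1 + σ)) * L y) =
        (fun y => y ^ (-(1 + σ)) * (L y - L t) + y ^ (-(1 + σ)) * L t) := by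
      funext y; ring
    have i4 : IntegrableOn (fun y => y ^ (-(1 + σ)) * L t) (Ioi t) := i1.mul_const _
    refine ⟨by rw [hsplit]; exact i3.add i4, ?_⟩
    have hn := norm_integral_le_of_norm_le (i2.const_mul B) hbd'
    rw [hsplit, integral_add i3 i4, integral_mul_const, v1]
    rw [integral_const_mul, v2, Real.norm_eq_abs] at hn
    have e1 : ∀ X : ℝ, X + t ^ (-σ) / σ * L t - L t / σ * t ^ (-σ) = X := by intro X; ring
    rw [e1]
    refine hn.trans (le_of_eq ?_)
    have e2 : t ^ (-σ) = t ^ (-(σ / 2)) * t ^ (-(σ / 2)) := by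
      rw [← rpow_add ht0]; congr 1; ring
    rw [hB, e2]; field_simp
  refine ⟨?_, fun t => (∫ y in Ioi t, y ^ (-(1 + σ)) * L y) / (L t / σ * t ^ (-σ)) - 1, ?_, ?_⟩
  · filter_upwards [eventually_ge_atTop T] with t ht using (key t ht).1
  · refine IsBigO.of_bound (2 * C) ?_
    filter_upwards [eventually_ge_atTop T] with t ht
    have htc : c ≤ t := hT.trans ht
    have ht0 : 0 < t := hc.trans_le htc
    have hLt := hLpos t htc
    have hrt := hrpos t htc
    have hD : 0 < L t / σ * t ^ (-σ) := by positivity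
    rw [div_sub_one hD.ne', norm_div, Real.norm_eq_abs, Real.norm_eq_abs, Real.norm_eq_abs,
      abs_of_pos hD, abs_of_pos hrt, div_le_iff₀ hD]
    exact (key t ht).2
  · filter_upwards [eventually_ge_atTop T] with t ht
    have htc : c ≤ t := hT.trans ht
    have ht0 : 0 < t := hc.trans_le htc
    have hLt := hLpos t htc
    have hD : 0 < L t / σ * t ^ (-σ) := by positivity
    rw [add_sub_cancel, mul_div_cancel₀ _ hD.ne']
end

section
/- Assume γ>0 and define w(s)=exp(−∫_s^1 (1−x)^{γ−1}·L(1/(1−x)) dx) for s∈[0,1) (the integral converges since γ>0). Then w satisfies the Schröder-type functional equation w(F(τ;s)) = w(s)/P(τ;s) for every τ≥0 and s∈[0,1). -/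
open Real Filter Asymptotics Set MeasureTheory

theorem sv_bound (L : ℝ → ℝ) (γ : ℝ) (hγ : 0 < γ) (hc : ContinuousOn L (Ici 1))
    (hpos : ∀ x ∈ Ici (1:ℝ), 0 < L x)
    (hsv : Tendsto (fun x => L (2 * x) / L x) atTop (nhds 1)) :
    ∃ M : ℝ, ∀ x, 1 ≤ x → L x ≤ M * x ^ γ := by
  have h1 : (1:ℝ) < 2 ^ γ := Real.one_lt_rpow (by norm_num) hγ
  obtain ⟨X0, hX0⟩ := eventually_atTop.1 (hsv.eventually (gt_mem_nhds h1))
  set X := max X0 1 with hX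
  have hX1 : 1 ≤ X := le_max_right _ _
  obtain ⟨M, hM⟩ := (isCompact_Icc (a := (1:ℝ)) (b := 2 * X)).bddAbove_image
    (hc.mono Icc_subset_Ici_self)
  have hM' : ∀ x ∈ Icc (1:ℝ) (2 * X), L x ≤ M := fun x hx => hM (mem_image_of_mem _ hx)
  have hM0 : 0 ≤ M := (hpos 1 (by simp)).le.trans (hM' 1 ⟨le_rfl, by linarith⟩)
  have key : ∀ n : ℕ, ∀ x, 1 ≤ x → x ≤ 2 ^ n * (2 * X) → L x ≤ M * x ^ γ := by
    intro n
    induction n with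
    | zero =>
      intro x hx hx2
      refine (hM' x ⟨hx, by simpa using hx2⟩).trans ?_
      exact le_mul_of_one_le_right hM0 (Real.one_le_rpow hx hγ.le)
    | succ n ih =>
      intro x hx hx2
      by_cases h : x ≤ 2 * X
      · refine (hM' x ⟨hx, h⟩).trans ?_
        exact le_mul_of_one_le_right hM0 (Real.one_le_rpow hx hγ.le)
      · push Not at h
        have hx3 : X ≤ x / 2 := by linarith
        have hx4 : 1 ≤ x / 2 := by linarith
        have i1 := ih (x / 2) hx4 (by rw [pow_succ] at hx2; linarith)
        have i2 := hX0 (x / 2) ((le_max_left _ _).trans hx3)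
        have e : 2 * (x / 2) = x := by ring
        rw [e, div_lt_iff₀ (hpos _ hx4)] at i2
        have e2 : x ^ γ = 2 ^ γ * (x / 2) ^ γ := by
          rw [← Real.mul_rpow (by norm_num) (by linarith), e]
        rw [e2]
        have := mul_le_mul_of_nonneg_left i1 (by linarith : (0:ℝ) ≤ 2 ^ γ)
        nlinarith
  refine ⟨M, fun x hx => ?_⟩
  obtain ⟨n, hn⟩ := pow_unbounded_of_one_lt x (by norm_num : (1:ℝ) < 2)
  refine key n x hx ?_
  have : (0:ℝ) < 2 ^ n := by positivity
  nlinarith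

theorem one_le_inv_aux (x : ℝ) (hx : x ∈ Ico (0:ℝ) 1) : (1:ℝ) ≤ 1 / (1 - x) := by
  rw [le_div_iff₀ (by linarith [hx.2])]; linarith [hx.1]

theorem cont_comp_aux (L : ℝ → ℝ) (hc : ContinuousOn L (Ici 1)) :
    ContinuousOn (fun x => L (1 / (1 - x))) (Ico (0:ℝ) 1) := by
  refine hc.comp (ContinuousOn.div continuousOn_const (by fun_prop) ?_) ?_
  · intro x hx; linarith [hx.2]
  · intro x hx; exact one_le_inv_aux x hx

theorem cont_rpow_aux (r : ℝ) :
    ContinuousOn (fun x : ℝ => (1 - x) ^ r) (Ico (0:ℝ) 1) := by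
  refine ContinuousOn.rpow_const (by fun_prop) ?_
  intro x hx; left; linarith [hx.2]

theorem integrable_aux (L : ℝ → ℝ) (γ : ℝ) (hγ : 0 < γ) (hc : ContinuousOn L (Ici 1))
    (hpos : ∀ x ∈ Ici (1:ℝ), 0 < L x)
    (hsv : Tendsto (fun x => L (2 * x) / L x) atTop (nhds 1)) :
    IntervalIntegrable (fun x => (1 - x) ^ (γ - 1) * L (1 / (1 - x))) volume 0 1 := by
  obtain ⟨M, hM⟩ := sv_bound L (γ / 2) (by linarith) hc hpos hsv
  have hi : IntervalIntegrable (fun x : ℝ => M * (1 - x) ^ (γ / 2 - 1)) volume 0 1 := by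
    have := (intervalIntegral.intervalIntegrable_rpow' (a := 0) (b := 1) (r := γ / 2 - 1)
      (by linarith)).comp_sub_left 1
    have h2 := this.symm.const_mul M
    simpa using h2
  rw [intervalIntegrable_iff_integrableOn_Ioo_of_le zero_le_one] at hi ⊢
  refine Integrable.mono' hi ?_ ?_
  · refine ContinuousOn.aestronglyMeasurable ?_ measurableSet_Ioo
    exact ((cont_rpow_aux (γ - 1)).mul (cont_comp_aux L hc)).mono Ioo_subset_Ico_self
  · refine (ae_restrict_iff' measurableSet_Ioo).2 (Eventually.of_forall fun x hx => ?_)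
    have hx1 := one_le_inv_aux x ⟨hx.1.le, hx.2⟩
    have hp : 0 < 1 - x := by linarith [hx.2]
    have hr : 0 < (1 - x) ^ (γ - 1) := Real.rpow_pos_of_pos hp _
    rw [Real.norm_of_nonneg (mul_pos hr (hpos _ hx1)).le]
    calc _ ≤ (1 - x) ^ (γ - 1) * (M * (1 / (1 - x)) ^ (γ / 2)) :=
          mul_le_mul_of_nonneg_left (hM _ hx1) hr.le
      _ = M * ((1 - x) ^ (γ - 1) * (1 - x) ^ (-(γ / 2))) := by
          rw [one_div, Real.inv_rpow hp.le, ← Real.rpow_neg hp.le]; ring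
      _ = _ := by
          rw [← Real.rpow_add hp]; congr 2; ring

theorem stmt12
    (ν δ γ : ℝ) (hν0 : 0 < ν) (hν1 : ν < 1) (hδ0 : 0 < δ) (hδ1 : δ < 1)
    (hγ : γ = δ - ν)
    (hγpos : 0 < γ)
    (𝓛 ℓ : ℝ → ℝ)
    (h𝓛pos : ∀ x ∈ Ici (1:ℝ), 0 < 𝓛 x) (hℓpos : ∀ x ∈ Ici (1:ℝ), 0 < ℓ x)
    (h𝓛cont : ContinuousOn 𝓛 (Ici 1)) (hℓcont : ContinuousOn ℓ (Ici 1))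
    (h𝓛sv : ∀ lam > (0:ℝ), Tendsto (fun x => 𝓛 (lam * x) / 𝓛 x) atTop (nhds 1))
    (hℓsv : ∀ lam > (0:ℝ), Tendsto (fun x => ℓ (lam * x) / ℓ x) atTop (nhds 1))
    (F : ℝ → ℝ → ℝ)
    (hFmem : ∀ s ∈ Ico (0:ℝ) 1, ∀ t : ℝ, 0 ≤ t → s ≤ F t s ∧ F t s < 1)
    (hF0 : ∀ s ∈ Ico (0:ℝ) 1, F 0 s = s)
    (hFode : ∀ s ∈ Ico (0:ℝ) 1, ∀ t : ℝ, 0 ≤ t →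
      HasDerivAt (fun u => F u s)
        ((1 - F t s) ^ (1 + ν) * 𝓛 (1 / (1 - F t s))) t)
 :
    ∀ τ : ℝ, 0 ≤ τ → ∀ s ∈ Ico (0:ℝ) 1,
      Real.exp (-∫ x in (F τ s)..(1:ℝ), (1 - x) ^ (γ - 1) * (ℓ (1 / (1 - x)) / 𝓛 (1 / (1 - x)))) =
        Real.exp (-∫ x in s..(1:ℝ), (1 - x) ^ (γ - 1) * (ℓ (1 / (1 - x)) / 𝓛 (1 / (1 - x)))) / Real.exp (∫ u in (0:ℝ)..τ, -(1 - F u s) ^ δ * ℓ (1 / (1 - F u s))) := by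
  intro τ hτ s hs
  set h : ℝ → ℝ := fun x => (1 - x) ^ (γ - 1) * (ℓ (1 / (1 - x)) / 𝓛 (1 / (1 - x))) with hh
  have hLc : ContinuousOn (fun x => ℓ x / 𝓛 x) (Ici 1) :=
    hℓcont.div h𝓛cont (fun x hx => (h𝓛pos x hx).ne')
  have hint : IntervalIntegrable h volume 0 1 := by
    refine integrable_aux (fun x => ℓ x / 𝓛 x) γ hγpos hLc
      (fun x hx => div_pos (hℓpos x hx) (h𝓛pos x hx)) ?_
    have := (hℓsv 2 two_pos).div (h𝓛sv 2 two_pos) one_ne_zero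
    rw [div_one] at this
    refine this.congr fun x => ?_
    simp only [Pi.div_apply]
    rw [div_div_div_comm]
  have hmem : ∀ t, 0 ≤ t → F t s ∈ Ico (0:ℝ) 1 := fun t ht =>
    ⟨hs.1.trans (hFmem s hs t ht).1, (hFmem s hs t ht).2⟩
  have hhc : ContinuousOn h (Ico 0 1) :=
    (cont_rpow_aux (γ - 1)).mul (cont_comp_aux _ hLc)
  have hFc : ContinuousOn (fun u => F u s) (uIcc 0 τ) := by
    rw [uIcc_of_le hτ]
    exact fun t ht => (hFode s hs t ht.1).continuousAt.continuousWithinAt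
  have hmaps : MapsTo (fun u => F u s) (uIcc 0 τ) (Ico 0 1) := by
    rw [uIcc_of_le hτ]
    exact fun t ht => hmem t ht.1
  have hcv := intervalIntegral.integral_comp_mul_deriv'' (a := 0) (b := τ)
    (f := fun u => F u s)
    (f' := fun t => (1 - F t s) ^ (1 + ν) * 𝓛 (1 / (1 - F t s))) (g := h) hFc
    (fun t ht => by
      rw [min_eq_left hτ] at ht
      exact (hFode s hs t ht.1.le).hasDerivWithinAt)
    (((cont_rpow_aux (1 + ν)).mul (cont_comp_aux _ h𝓛cont)).comp hFc hmaps)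
    (hhc.mono hmaps.image_subset)
  simp only [hF0 s hs] at hcv
  have hP : (∫ u in (0:ℝ)..τ, -(1 - F u s) ^ δ * ℓ (1 / (1 - F u s)))
      = -∫ x in s..(F τ s), h x := by
    rw [← hcv, ← intervalIntegral.integral_neg]
    refine intervalIntegral.integral_congr fun t ht => ?_
    rw [uIcc_of_le hτ] at ht
    have hm := hmem t ht.1
    have hp : 0 < 1 - F t s := by linarith [hm.2]
    have hL := (h𝓛pos _ (one_le_inv_aux _ hm)).ne'
    have e : (1 - F t s) ^ δ = (1 - F t s) ^ (γ - 1) * (1 - F t s) ^ (1 + ν) := by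
      rw [← Real.rpow_add hp]; congr 1; rw [hγ]; ring
    simp only [hh, Function.comp_apply]
    rw [e]
    generalize 𝓛 (1 / (1 - F t s)) = a at *
    field_simp
  have hsub : ∀ a ∈ Icc (0:ℝ) 1, ∀ b ∈ Icc (0:ℝ) 1, IntervalIntegrable h volume a b := by
    intro a ha b hb
    refine hint.mono_set ?_
    rw [uIcc_of_le (zero_le_one' ℝ)]
    exact uIcc_subset_Icc ha hb
  have hs' : s ∈ Icc (0:ℝ) 1 := ⟨hs.1, hs.2.le⟩
  have hF' : F τ s ∈ Icc (0:ℝ) 1 := ⟨(hmem τ hτ).1, (hmem τ hτ).2.le⟩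
  have hadd := intervalIntegral.integral_add_adjacent_intervals (hsub s hs' _ hF')
    (hsub _ hF' 1 ⟨zero_le_one, le_rfl⟩)
  rw [hP, ← Real.exp_sub, ← hadd]
  congr 1
  ring
end

section
/- Assume γ>0. Then for every s∈[0,1), P(t;s) → w(s) as t→∞, where w(s)=exp(−∫_s^1 (1−x)^{γ−1}·L(1/(1−x)) dx). -/
open Real Filter Asymptotics Set MeasureTheory

/-- A scaling criterion for integrability at zero. -/
theorem aux_integrable (k : ℝ → ℝ) (hk : ContinuousOn k (Ioc 0 1))
    (hk0 : ∀ v ∈ Ioc (0:ℝ) 1, 0 ≤ k v) (q η : ℝ) (hq0 : 0 ≤ q) (hq1 : q < 1) (hη0 : 0 < η)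
    (hη1 : η ≤ 1) (hs : ∀ v ∈ Ioc (0:ℝ) η, k (v / 2) ≤ 2 * q * k v) :
    IntervalIntegrable k volume 0 1 := by
  have hii : ∀ a b : ℝ, 0 < a → a ≤ 1 → 0 < b → b ≤ 1 → IntervalIntegrable k volume a b := by
    intro a b ha ha1 hb hb1
    apply ContinuousOn.intervalIntegrable
    apply hk.mono
    intro x hx
    rw [mem_uIcc] at hx
    constructor
    · rcases hx with h | h <;> linarith [h.1]
    · rcases hx with h | h <;> linarith [h.2]
  have key : ∀ ε : ℝ, 0 < ε → ε ≤ η →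
      ∫ v in (ε / 2)..1, k v ≤ (∫ v in (η / 2)..1, k v) / (1 - q) := by
    intro ε he heη
    have h1 : (∫ v in (ε/2)..(η/2), k v) + ∫ v in (η/2)..1, k v = ∫ v in (ε/2)..1, k v :=
      intervalIntegral.integral_add_adjacent_intervals
        (hii _ _ (by linarith) (by linarith) (by linarith) (by linarith))
        (hii _ _ (by linarith) (by linarith) (by linarith) (by linarith))
    have h2 : ∫ v in ε..η, k (v / 2) = 2 * ∫ v in (ε/2)..(η/2), k v := by
      rw [intervalIntegral.integral_comp_div k (by norm_num : (2:ℝ) ≠ 0)]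
      simp
    have hi2 : IntervalIntegrable (fun v => k (v / 2)) volume ε η := by
      apply ContinuousOn.intervalIntegrable
      rw [uIcc_of_le heη]
      refine hk.comp (by fun_prop) ?_
      intro x hx
      exact ⟨by linarith [hx.1], by linarith [hx.2]⟩
    have h3 : ∫ v in ε..η, k (v / 2) ≤ ∫ v in ε..η, 2 * q * k v := by
      apply intervalIntegral.integral_mono_on heη hi2
        ((hii _ _ he (by linarith) hη0 hη1).const_mul _)
      intro x hx
      exact hs x ⟨by linarith [hx.1], hx.2⟩
    rw [intervalIntegral.integral_const_mul, h2] at h3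
    have h4 : ∫ v in ε..η, k v ≤ ∫ v in (ε/2)..1, k v := by
      apply intervalIntegral.integral_mono_interval (by linarith) heη hη1
      · rw [Filter.EventuallyLE, ae_restrict_iff' measurableSet_Ioc]
        refine Eventually.of_forall ?_
        intro x hx
        exact hk0 x ⟨by linarith [hx.1], hx.2⟩
      · exact hii _ _ (by linarith) (by linarith) (by norm_num) le_rfl
    rw [le_div_iff₀ (by linarith)]
    nlinarith [mul_le_mul_of_nonneg_left h4 hq0]
  rw [intervalIntegrable_iff_integrableOn_Ioc_of_le zero_le_one]
  have hT : Tendsto (fun n : ℕ => η / ((n:ℝ) + 1) / 2) atTop (nhds 0) := by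
    have : Tendsto (fun n : ℕ => (η / 2) * (1 / ((n:ℝ) + 1))) atTop (nhds ((η / 2) * 0)) :=
      tendsto_one_div_add_atTop_nhds_zero_nat.const_mul _
    rw [mul_zero] at this
    refine this.congr ?_
    intro n
    ring
  have hb : ∀ n : ℕ, 0 < η / ((n:ℝ) + 1) ∧ η / ((n:ℝ) + 1) ≤ η := by
    intro n
    refine ⟨by positivity, div_le_self hη0.le (by linarith [n.cast_nonneg (α := ℝ)])⟩
  refine integrableOn_Ioc_of_intervalIntegral_norm_bounded_left
    (I := (∫ v in (η / 2)..1, k v) / (1 - q)) (l := atTop)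
    (a := fun n : ℕ => η / ((n:ℝ) + 1) / 2) (fun n => ?_) hT (Eventually.of_forall fun n => ?_)
  · have h := hb n
    exact (intervalIntegrable_iff_integrableOn_Ioc_of_le (by linarith)).1
      (hii _ _ (by linarith) (by linarith) (by norm_num) le_rfl)
  · have h := hb n
    refine le_trans (le_of_eq ?_) (key _ h.1 h.2)
    rw [intervalIntegral.integral_of_le (by linarith)]
    apply setIntegral_congr_fun measurableSet_Ioc
    intro x hx
    exact Real.norm_of_nonneg (hk0 x ⟨by linarith [hx.1], hx.2⟩)

theorem aux_main (γ : ℝ) (hγpos : 0 < γ)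
    (𝓛 ℓ : ℝ → ℝ)
    (h𝓛pos : ∀ x ∈ Ici (1:ℝ), 0 < 𝓛 x) (hℓpos : ∀ x ∈ Ici (1:ℝ), 0 < ℓ x)
    (h𝓛cont : ContinuousOn 𝓛 (Ici 1)) (hℓcont : ContinuousOn ℓ (Ici 1))
    (h𝓛sv : ∀ lam > (0:ℝ), Tendsto (fun x => 𝓛 (lam * x) / 𝓛 x) atTop (nhds 1))
    (hℓsv : ∀ lam > (0:ℝ), Tendsto (fun x => ℓ (lam * x) / ℓ x) atTop (nhds 1)) :
    IntervalIntegrable (fun v => v ^ (γ - 1) * (ℓ (1 / v) / 𝓛 (1 / v))) volume 0 1 := by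
  have hmem : ∀ v ∈ Ioc (0:ℝ) 1, 1 / v ∈ Ici (1:ℝ) := fun v hv => by
    rw [mem_Ici, le_div_iff₀ hv.1]; linarith [hv.2]
  have h2g : (1:ℝ) < 2 ^ γ := Real.one_lt_rpow (by norm_num) hγpos
  have hr : Tendsto (fun x => (ℓ (2 * x) / ℓ x) / (𝓛 (2 * x) / 𝓛 x)) atTop (nhds (1 / 1)) :=
    (hℓsv 2 (by norm_num)).div (h𝓛sv 2 (by norm_num)) one_ne_zero
  rw [div_one] at hr
  have hev := hr.eventually (eventually_le_nhds (b := ((2:ℝ) ^ γ + 1) / 2) (by linarith))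
  obtain ⟨M, hM⟩ := eventually_atTop.1 hev
  set N := max M 1
  have hN1 : 1 ≤ N := le_max_right _ _
  have hN0 : 0 < N := by linarith
  refine aux_integrable _ ?_ ?_ (((2:ℝ) ^ γ + 1) / 2 / 2 ^ γ) (1 / N) (by positivity) ?_
    (by positivity) ?_ ?_
  · have hc : ContinuousOn (fun v : ℝ => 1 / v) (Ioc 0 1) :=
      continuousOn_const.div continuousOn_id (fun x hx => hx.1.ne')
    refine ContinuousOn.mul ?_ (ContinuousOn.div (hℓcont.comp hc hmem) (h𝓛cont.comp hc hmem) ?_)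
    · exact continuousOn_id.rpow_const (fun x hx => Or.inl hx.1.ne')
    · exact fun x hx => (h𝓛pos _ (hmem x hx)).ne'
  · intro v hv
    have := hℓpos _ (hmem v hv)
    have := h𝓛pos _ (hmem v hv)
    have := hv.1
    positivity
  · rw [div_lt_one (by positivity)]; linarith
  · rw [div_le_one hN0]; exact hN1
  · intro v hv
    have hv0 := hv.1
    have hv1 : N ≤ 1 / v := by
      rw [le_div_iff₀ hv0]
      have := (le_div_iff₀ hN0).1 hv.2
      linarith
    have hm := hM (1 / v) ((le_max_left _ _).trans hv1)
    have e : 1 / (v / 2) = 2 * (1 / v) := by field_simp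
    have hA : 0 < ℓ (1 / v) := hℓpos _ (hN1.trans hv1)
    have hB : 0 < 𝓛 (1 / v) := h𝓛pos _ (hN1.trans hv1)
    have hB2 : 0 < 𝓛 (2 * (1 / v)) := h𝓛pos _ (by rw [mem_Ici]; linarith)
    simp only [e]
    have e2 : (v / 2) ^ (γ - 1) = v ^ (γ - 1) * (2 / 2 ^ γ) := by
      rw [Real.div_rpow hv0.le (by norm_num), Real.rpow_sub (by norm_num : (0:ℝ) < 2), Real.rpow_one]
      field_simp
    have hm2 : ℓ (2 * (1 / v)) / 𝓛 (2 * (1 / v)) ≤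
        ((2:ℝ) ^ γ + 1) / 2 * (ℓ (1 / v) / 𝓛 (1 / v)) := by
      have e3 : ℓ (2 * (1 / v)) / 𝓛 (2 * (1 / v)) =
        (ℓ (2 * (1 / v)) / ℓ (1 / v)) / (𝓛 (2 * (1 / v)) / 𝓛 (1 / v)) *
          (ℓ (1 / v) / 𝓛 (1 / v)) := by
        generalize ℓ (2 * (1 / v)) = a at *
        generalize 𝓛 (2 * (1 / v)) = b at *
        generalize ℓ (1 / v) = c at *
        generalize 𝓛 (1 / v) = d at *
        field_simp
      rw [e3]
      exact mul_le_mul_of_nonneg_right hm (by positivity)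
    rw [e2]
    calc _ ≤ v ^ (γ - 1) * (2 / 2 ^ γ) * (((2:ℝ) ^ γ + 1) / 2 * (ℓ (1 / v) / 𝓛 (1 / v))) :=
          mul_le_mul_of_nonneg_left hm2 (by positivity)
      _ = _ := by ring

theorem stmt13
    (ν δ γ : ℝ) (hν0 : 0 < ν) (hν1 : ν < 1) (hδ0 : 0 < δ) (hδ1 : δ < 1)
    (hγ : γ = δ - ν)
    (hγpos : 0 < γ)
    (𝓛 ℓ : ℝ → ℝ)
    (h𝓛pos : ∀ x ∈ Ici (1:ℝ), 0 < 𝓛 x) (hℓpos : ∀ x ∈ Ici (1:ℝ), 0 < ℓ x)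
    (h𝓛cont : ContinuousOn 𝓛 (Ici 1)) (hℓcont : ContinuousOn ℓ (Ici 1))
    (h𝓛sv : ∀ lam > (0:ℝ), Tendsto (fun x => 𝓛 (lam * x) / 𝓛 x) atTop (nhds 1))
    (hℓsv : ∀ lam > (0:ℝ), Tendsto (fun x => ℓ (lam * x) / ℓ x) atTop (nhds 1))
    (F : ℝ → ℝ → ℝ)
    (hFmem : ∀ s ∈ Ico (0:ℝ) 1, ∀ t : ℝ, 0 ≤ t → s ≤ F t s ∧ F t s < 1)
    (hF0 : ∀ s ∈ Ico (0:ℝ) 1, F 0 s = s)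
    (hFode : ∀ s ∈ Ico (0:ℝ) 1, ∀ t : ℝ, 0 ≤ t →
      HasDerivAt (fun u => F u s)
        ((1 - F t s) ^ (1 + ν) * 𝓛 (1 / (1 - F t s))) t)
 :
    ∀ s ∈ Ico (0:ℝ) 1,
      Tendsto (fun t => Real.exp (∫ u in (0:ℝ)..t, -(1 - F u s) ^ δ * ℓ (1 / (1 - F u s)))) atTop (nhds (Real.exp (-∫ x in s..(1:ℝ), (1 - x) ^ (γ - 1) * (ℓ (1 / (1 - x)) / 𝓛 (1 / (1 - x)))))) := by
  intro s hs
  have hk := aux_main γ hγpos 𝓛 ℓ h𝓛pos hℓpos h𝓛cont hℓcont h𝓛sv hℓsv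
  have hmem : ∀ x ∈ Ico (0:ℝ) 1, 1 / (1 - x) ∈ Ici (1:ℝ) := fun x hx => by
    rw [mem_Ici, le_div_iff₀ (by linarith [hx.2])]; linarith [hx.1]
  have hcinv : ContinuousOn (fun x : ℝ => 1 / (1 - x)) (Ico 0 1) :=
    continuousOn_const.div (by fun_prop) (fun x hx => by linarith [hx.2])
  have hcpow : ∀ p : ℝ, ContinuousOn (fun x : ℝ => (1 - x) ^ p) (Ico 0 1) := fun p =>
    ContinuousOn.rpow_const (by fun_prop) (fun x hx => Or.inl (by linarith [hx.2]))
  have hc𝓛 := h𝓛cont.comp hcinv hmem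
  have hcℓ := hℓcont.comp hcinv hmem
  set f : ℝ → ℝ := fun x => (1 - x) ^ (1 + ν) * 𝓛 (1 / (1 - x)) with hf
  set h : ℝ → ℝ := fun x => (1 - x) ^ (γ - 1) * (ℓ (1 / (1 - x)) / 𝓛 (1 / (1 - x))) with hh
  have hfc : ContinuousOn f (Ico 0 1) := (hcpow _).mul hc𝓛
  have hhc : ContinuousOn h (Ico 0 1) :=
    (hcpow _).mul (hcℓ.div hc𝓛 fun x hx => (h𝓛pos _ (hmem x hx)).ne')
  have hfpos : ∀ x ∈ Ico (0:ℝ) 1, 0 < f x := fun x hx =>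
    mul_pos (Real.rpow_pos_of_pos (by linarith [hx.2]) _) (h𝓛pos _ (hmem x hx))
  have hFI : ∀ t, 0 ≤ t → F t s ∈ Ico (0:ℝ) 1 := fun t ht =>
    ⟨hs.1.trans (hFmem s hs t ht).1, (hFmem s hs t ht).2⟩
  have hd : ∀ t, 0 ≤ t → HasDerivAt (fun u => F u s) (f (F t s)) t := hFode s hs
  have hFc : ContinuousOn (fun u => F u s) (Ici 0) := fun t ht =>
    (hd t ht).continuousAt.continuousWithinAt
  have hfFc : ContinuousOn (fun u => f (F u s)) (Ici 0) := hfc.comp hFc hFI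
  have hmono : MonotoneOn (fun u => F u s) (Ici 0) := by
    refine monotoneOn_of_deriv_nonneg (convex_Ici 0) hFc ?_ ?_
    · intro x hx
      rw [interior_Ici] at hx
      exact (hd x (le_of_lt hx)).differentiableAt.differentiableWithinAt
    · intro x hx
      rw [interior_Ici] at hx
      rw [(hd x (le_of_lt hx)).deriv]
      exact (hfpos _ (hFI x (le_of_lt hx))).le
  have hlim : Tendsto (fun t => F t s) atTop (nhds 1) := by
    rw [tendsto_order]
    refine ⟨fun b hb => ?_, fun b hb => ?_⟩
    swap
    · filter_upwards [eventually_ge_atTop 0] with t ht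
      exact (hFI t ht).2.trans hb
    by_contra hcon
    have hle : ∀ t, 0 ≤ t → F t s ≤ b := by
      intro t ht
      by_contra hlt
      push Not at hlt
      apply hcon
      filter_upwards [eventually_ge_atTop t] with u hu
      exact hlt.trans_le (hmono ht (ht.trans hu) hu)
    have hsb : s ≤ b := (hF0 s hs) ▸ hle 0 le_rfl
    have hsub : Icc s b ⊆ Ico (0:ℝ) 1 := fun x hx => ⟨hs.1.trans hx.1, hx.2.trans_lt hb⟩
    obtain ⟨m, hm, hmin⟩ := isCompact_Icc.exists_isMinOn (nonempty_Icc.2 hsb) (hfc.mono hsub)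
    have hmp : 0 < f m := hfpos m (hsub hm)
    have hgrow : ∀ t, 0 ≤ t → f m * (t - 0) ≤ F t s - F 0 s := by
      intro t ht
      refine (convex_Ici (0:ℝ)).mul_sub_le_image_sub_of_le_deriv hFc ?_ ?_ 0 self_mem_Ici t ht ht
      · intro x hx
        rw [interior_Ici] at hx
        exact (hd x (le_of_lt hx)).differentiableAt.differentiableWithinAt
      · intro x hx
        rw [interior_Ici] at hx
        rw [(hd x (le_of_lt hx)).deriv]
        exact hmin ⟨(hFmem s hs x (le_of_lt hx)).1, hle x (le_of_lt hx)⟩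
    have h1 := hgrow (1 / f m) (by positivity)
    have h2 := (hFI (1 / f m) (by positivity)).2
    have h3 := (hFI 0 le_rfl).1
    rw [sub_zero, mul_one_div_cancel hmp.ne'] at h1
    linarith
  have hInt : IntervalIntegrable h volume s 1 := by
    have h1 := hk.comp_sub_left 1
    simp only [sub_zero, sub_self] at h1
    refine h1.symm.mono_set ?_
    rw [uIcc_of_le hs.2.le, uIcc_of_le zero_le_one]
    exact Icc_subset_Icc_left hs.1
  have hsubst : ∀ t, 0 ≤ t →
      ∫ u in (0:ℝ)..t, -(1 - F u s) ^ δ * ℓ (1 / (1 - F u s)) = -∫ x in s..(F t s), h x := by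
    intro t ht
    have hsubt : uIcc 0 t ⊆ Ici (0:ℝ) := by
      rw [uIcc_of_le ht]; exact fun x hx => hx.1
    have h1 := intervalIntegral.integral_comp_mul_deriv' (a := 0) (b := t)
      (f := fun u => F u s) (f' := fun u => f (F u s)) (g := h)
      (fun x hx => hd x (hsubt hx)) (hfFc.mono hsubt)
      (hhc.mono (by rintro _ ⟨u, hu, rfl⟩; exact hFI u (hsubt hu)))
    simp only [hF0 s hs] at h1
    rw [← h1, ← intervalIntegral.integral_neg]
    apply intervalIntegral.integral_congr
    intro u hu
    have hu1 := hFI u (hsubt hu)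
    have hL := h𝓛pos _ (hmem _ hu1)
    have hv : 0 < 1 - F u s := by linarith [hu1.2]
    have hp : (1 - F u s) ^ δ = (1 - F u s) ^ (γ - 1) * (1 - F u s) ^ (1 + ν) := by
      rw [← Real.rpow_add hv, hγ]; congr 1; ring
    simp only [Function.comp, hf, hh]
    rw [hp]
    generalize 𝓛 (1 / (1 - F u s)) = A at *
    field_simp
  have hprim : ContinuousOn (fun y => ∫ x in s..y, h x) (uIcc s 1) :=
    intervalIntegral.continuousOn_primitive_interval' hInt left_mem_uIcc
  have hlim2 : Tendsto (fun t => F t s) atTop (nhdsWithin 1 (uIcc s 1)) := by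
    refine tendsto_nhdsWithin_iff.2 ⟨hlim, ?_⟩
    filter_upwards [eventually_ge_atTop 0] with t ht
    rw [uIcc_of_le hs.2.le]
    exact ⟨(hFmem s hs t ht).1, (hFI t ht).2.le⟩
  have hfin := (hprim 1 right_mem_uIcc).tendsto.comp hlim2
  refine (Real.continuous_exp.tendsto _).comp ?_
  refine hfin.neg.congr' ?_
  filter_upwards [eventually_ge_atTop 0] with t ht
  rw [hsubst t ht]
  rfl
end

section
/- Assume γ<0, 1<ν/δ<2, and that L(x)=ℓ(x)/𝓛(x) satisfies L(x)=|γ|·(1+O(ℓ(x)/x^δ)) as x→∞. Then the function u ↦ g(u)/f(u) + |γ|·(1−u)^{−(1+|γ|)} is absolutely integrable on [0,1); consequently B(s) := exp( ∫_s^1 [ g(u)/f(u) + |γ|·(1−u)^{−(1+|γ|)} ] du ) is well defined and bounded for s∈[0,1), and B(s)→1 as s↑1. -/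
open Real Filter Asymptotics Set MeasureTheory

/-- Potter-type upper bound for a continuous slowly varying function. -/
theorem potter_aux (l : ℝ → ℝ) (hpos : ∀ x ∈ Ici (1:ℝ), 0 < l x) (hc : ContinuousOn l (Ici 1))
    (hsv : Tendsto (fun x => l (2 * x) / l x) atTop (nhds 1)) (e : ℝ) (he : 0 < e) :
    ∃ K, ∀ x, 1 ≤ x → l x ≤ K * x ^ e := by
  have h1 : (1:ℝ) < 2 ^ e := Real.one_lt_rpow (by norm_num) he
  obtain ⟨X0, hX0⟩ := Filter.eventually_atTop.1 (hsv.eventually (gt_mem_nhds h1))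
  set X := max X0 1 with hX
  have hX1 : 1 ≤ X := le_max_right _ _
  have hc2 : ContinuousOn (fun x => l x / x ^ e) (Icc 1 (2 * X)) := by
    apply ContinuousOn.div (hc.mono fun x hx => hx.1)
    · exact continuousOn_id.rpow_const fun x hx => Or.inr he.le
    · intro x hx
      have : 0 < x := by linarith [hx.1]
      positivity
  obtain ⟨M, hM⟩ := isCompact_Icc.exists_bound_of_continuousOn hc2
  have key : ∀ n : ℕ, ∀ x, 1 ≤ x → x ≤ 2 ^ n * X → l x / x ^ e ≤ M := by
    intro n
    induction n with
    | zero =>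
      intro x hx hx2
      exact (le_abs_self _).trans (hM x ⟨hx, by simp at hx2; linarith⟩)
    | succ n ih =>
      intro x hx hx2
      by_cases h : x ≤ 2 * X
      · exact (le_abs_self _).trans (hM x ⟨hx, h⟩)
      · push Not at h
        have hy1 : 1 ≤ x / 2 := by linarith
        have hi := ih (x / 2) hy1 (by rw [pow_succ] at hx2; linarith)
        have hr := hX0 (x / 2) (by have := le_max_left X0 1; linarith)
        have hp := hpos (x / 2) hy1
        rw [show 2 * (x / 2) = x by ring, div_lt_iff₀ hp] at hr
        refine le_trans ?_ hi
        rw [Real.div_rpow (by linarith) (by norm_num)]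
        have hx0 : 0 < x := by linarith
        have hxe : 0 < x ^ e := by positivity
        rw [div_div_eq_mul_div]
        apply div_le_div_of_nonneg_right _ hxe.le
        linarith
  refine ⟨M, fun x hx => ?_⟩
  obtain ⟨n, hn⟩ := pow_unbounded_of_one_lt x (by norm_num : (1:ℝ) < 2)
  have hx0 : 0 < x := by linarith
  have := key n x hx (hn.le.trans (le_mul_of_one_le_right (by positivity) hX1))
  rwa [div_le_iff₀ (by positivity)] at this

theorem stmt15
    (ν δ γ : ℝ) (hν0 : 0 < ν) (hν1 : ν < 1) (hδ0 : 0 < δ) (hδ1 : δ < 1)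
    (hγ : γ = δ - ν)
    (hγneg : γ < 0)
    (𝓛 ℓ : ℝ → ℝ)
    (h𝓛pos : ∀ x ∈ Ici (1:ℝ), 0 < 𝓛 x) (hℓpos : ∀ x ∈ Ici (1:ℝ), 0 < ℓ x)
    (h𝓛cont : ContinuousOn 𝓛 (Ici 1)) (hℓcont : ContinuousOn ℓ (Ici 1))
    (h𝓛sv : ∀ lam > (0:ℝ), Tendsto (fun x => 𝓛 (lam * x) / 𝓛 x) atTop (nhds 1))
    (hℓsv : ∀ lam > (0:ℝ), Tendsto (fun x => ℓ (lam * x) / ℓ x) atTop (nhds 1))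
    (hr1 : 1 < ν / δ) (hr2 : ν / δ < 2)
    (hLgam : (fun x => ℓ x / 𝓛 x - |γ|) =O[atTop] fun x => ℓ x / x ^ δ)
 :
    IntegrableOn (fun u => (-(1 - u) ^ δ * ℓ (1 / (1 - u))) / ((1 - u) ^ (1 + ν) * 𝓛 (1 / (1 - u))) + |γ| * (1 - u) ^ (-(1 + |γ|))) (Ico (0:ℝ) 1) ∧
    (∃ C : ℝ, ∀ s ∈ Ico (0:ℝ) 1, Real.exp (∫ u in s..(1:ℝ), (-(1 - u) ^ δ * ℓ (1 / (1 - u))) / ((1 - u) ^ (1 + ν) * 𝓛 (1 / (1 - u))) + |γ| * (1 - u) ^ (-(1 + |γ|))) ≤ C) ∧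
    Tendsto (fun s => Real.exp (∫ u in s..(1:ℝ), (-(1 - u) ^ δ * ℓ (1 / (1 - u))) / ((1 - u) ^ (1 + ν) * 𝓛 (1 / (1 - u))) + |γ| * (1 - u) ^ (-(1 + |γ|)))) (nhdsWithin 1 (Iio 1)) (nhds 1) := by
  have habs : |γ| = ν - δ := by rw [abs_of_neg hγneg, hγ]; ring
  have h2 : ν < 2 * δ := by rwa [div_lt_iff₀ hδ0] at hr2
  obtain ⟨e, he⟩ : ∃ e, e = (2 * δ - ν) / 2 := ⟨_, rfl⟩
  have he0 : 0 < e := by rw [he]; linarith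
  obtain ⟨K, hK⟩ := potter_aux ℓ hℓpos hℓcont (hℓsv 2 (by norm_num)) e he0
  have hbound : ∃ C, ∀ x, 1 ≤ x → |ℓ x / 𝓛 x - (|γ|)| ≤ C * x ^ (e - δ) := by
    obtain ⟨c, hc⟩ := hLgam.bound
    obtain ⟨X, hX⟩ := Filter.eventually_atTop.1 hc
    have hcq : ContinuousOn (fun x => (ℓ x / 𝓛 x - |γ|) / x ^ (e - δ)) (Icc 1 X) := by
      apply ContinuousOn.div
      · exact ((hℓcont.mono fun x hx => hx.1).div (h𝓛cont.mono fun x hx => hx.1)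
          fun x hx => (h𝓛pos x hx.1).ne').sub continuousOn_const
      · exact continuousOn_id.rpow_const fun x hx => Or.inl (by simp; linarith [hx.1])
      · intro x hx
        have : 0 < x := by linarith [hx.1]
        positivity
    obtain ⟨M, hM⟩ := isCompact_Icc.exists_bound_of_continuousOn hcq
    refine ⟨max M (|c| * K), fun x hx => ?_⟩
    have hx0 : 0 < x := by linarith
    have hp : 0 < x ^ (e - δ) := by positivity
    by_cases h : x ≤ X
    · have := hM x ⟨hx, h⟩
      rw [Real.norm_eq_abs, abs_div, abs_of_pos hp, div_le_iff₀ hp] at this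
      exact this.trans (mul_le_mul_of_nonneg_right (le_max_left _ _) hp.le)
    · push Not at h
      have h3 := hX x h.le
      have hl := hℓpos x hx
      have hxd : 0 < x ^ δ := by positivity
      rw [Real.norm_eq_abs, Real.norm_eq_abs, abs_of_pos (div_pos hl hxd)] at h3
      refine h3.trans ((?_ : _ ≤ (|c| * K) * x ^ (e - δ)).trans
        (mul_le_mul_of_nonneg_right (le_max_right _ _) hp.le))
      rw [Real.rpow_sub hx0, mul_assoc]
      calc c * (ℓ x / x ^ δ) ≤ |c| * (ℓ x / x ^ δ) :=
            mul_le_mul_of_nonneg_right (le_abs_self _) (div_pos hl hxd).le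
        _ ≤ |c| * (K * (x ^ e / x ^ δ)) := by
            apply mul_le_mul_of_nonneg_left _ (abs_nonneg _)
            rw [← mul_div_assoc]
            exact div_le_div_of_nonneg_right (hK x hx) hxd.le
  obtain ⟨C, hC⟩ := hbound
  set F : ℝ → ℝ := fun u => (-(1 - u) ^ δ * ℓ (1 / (1 - u))) / ((1 - u) ^ (1 + ν) * 𝓛 (1 / (1 - u))) + |γ| * (1 - u) ^ (-(1 + |γ|)) with hF
  have hinv : ∀ u ∈ Ico (0:ℝ) 1, 1 ≤ 1 / (1 - u) := by
    intro u hu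
    rw [le_div_iff₀ (by linarith [hu.2])]; linarith [hu.1]
  have hFle : ∀ u ∈ Ico (0:ℝ) 1, ‖F u‖ ≤ C * (1 - u) ^ (e - 1) := by
    intro u hu
    have h1 := hC _ (hinv u hu)
    have hLp := h𝓛pos _ (hinv u hu)
    have ht : 0 < 1 - u := by linarith [hu.2]
    have hFe : F u = -((ℓ (1 / (1 - u)) / 𝓛 (1 / (1 - u)) - |γ|) * (1 - u) ^ (-(1 + |γ|))) := by
      simp only [hF]
      have e1 : (1 - u) ^ (-(1 + |γ|)) = (1 - u) ^ δ / (1 - u) ^ (1 + ν) := by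
        rw [← Real.rpow_sub ht, habs]; congr 1; ring
      rw [e1]
      have : 0 < (1 - u) ^ (1 + ν) := by positivity
      field_simp
      ring
    have hp : 0 < (1 - u) ^ (-(1 + |γ|)) := by positivity
    rw [hFe, norm_neg, Real.norm_eq_abs, abs_mul, abs_of_pos hp]
    refine (mul_le_mul_of_nonneg_right h1 hp.le).trans_eq ?_
    rw [one_div, Real.inv_rpow ht.le, ← Real.rpow_neg ht.le, mul_assoc, ← Real.rpow_add ht, habs]
    congr 2
    rw [he]; ring
  have hFc : ContinuousOn F (Ico 0 1) := by
    have hne : ∀ u ∈ Ico (0:ℝ) 1, 1 - u ≠ 0 := fun u hu => by linarith [hu.2]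
    have ct : ContinuousOn (fun u : ℝ => 1 - u) (Ico 0 1) := by fun_prop
    have ci : ContinuousOn (fun u : ℝ => 1 / (1 - u)) (Ico 0 1) := continuousOn_const.div ct hne
    have cp : ∀ p : ℝ, ContinuousOn (fun u : ℝ => (1 - u) ^ p) (Ico 0 1) := fun p =>
      ct.rpow_const fun u hu => Or.inl (hne u hu)
    have cl : ContinuousOn (fun u : ℝ => ℓ (1 / (1 - u))) (Ico 0 1) := hℓcont.comp ci hinv
    have cL : ContinuousOn (fun u : ℝ => 𝓛 (1 / (1 - u))) (Ico 0 1) := h𝓛cont.comp ci hinv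
    refine (((cp δ).neg.mul cl).div ((cp (1 + ν)).mul cL) ?_).add (continuousOn_const.mul (cp _))
    intro u hu
    have ht : 0 < 1 - u := by linarith [hu.2]
    have := h𝓛pos _ (hinv u hu)
    exact (mul_pos (Real.rpow_pos_of_pos ht _) this).ne'
  have hgint : IntegrableOn (fun u : ℝ => C * (1 - u) ^ (e - 1)) (Ico 0 1) := by
    have h := (intervalIntegral.intervalIntegrable_rpow' (a := 0) (b := 1)
      (by linarith : -1 < e - 1)).comp_sub_left 1
    simp only [sub_zero, sub_self] at h
    have h' := (intervalIntegrable_iff_integrableOn_Ico_of_le (zero_le_one' ℝ)).1 h.symm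
    exact h'.const_mul C
  have hFint : IntegrableOn F (Ico 0 1) := by
    refine Integrable.mono' hgint (hFc.aestronglyMeasurable measurableSet_Ico) ?_
    exact (ae_restrict_iff' measurableSet_Ico).2 (Eventually.of_forall hFle)
  have hFint' : IntegrableOn F (uIcc 0 1) := by
    rw [uIcc_of_le zero_le_one]
    exact (integrableOn_Icc_iff_integrableOn_Ico).2 hFint
  have hcont : ContinuousOn (fun s => Real.exp (∫ u in s..(1:ℝ), F u)) (Icc 0 1) := by
    have := intervalIntegral.continuousOn_primitive_interval_left hFint'
    rw [uIcc_of_le zero_le_one] at this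
    exact this.rexp
  refine ⟨hFint, ?_, ?_⟩
  · obtain ⟨M, hM⟩ := isCompact_Icc.exists_bound_of_continuousOn hcont
    exact ⟨M, fun s hs => (le_abs_self _).trans (hM s ⟨hs.1, hs.2.le⟩)⟩
  · have h := (hcont 1 ⟨zero_le_one, le_rfl⟩).tendsto
    simp only [intervalIntegral.integral_same, Real.exp_zero] at h
    refine h.mono_left ?_
    rw [← nhdsWithin_Ico_eq_nhdsLT (zero_lt_one' ℝ)]
    exact nhdsWithin_mono _ Ico_subset_Icc_self
end

section
/- Assume γ<0, 1<ν/δ<2, and that L(x)=ℓ(x)/𝓛(x) satisfies L(x)=|γ|·(1+O(ℓ(x)/x^δ)) as x→∞. Define π(s)=exp( (1−s)^{−|γ|} + ∫_s^1 [ g(u)/f(u) + |γ|·(1−u)^{−(1+|γ|)} ] du ) for s∈[0,1). Then π(s) ~ exp( (1−s)^{−|γ|} ) as s↑1, i.e. π(s)·exp(−(1−s)^{−|γ|}) → 1 as s↑1. -/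
open Real Filter Asymptotics Set MeasureTheory

theorem sv_bound_s16 (ℓ : ℝ → ℝ) (hℓpos : ∀ x ∈ Ici (1:ℝ), 0 < ℓ x) (hℓcont : ContinuousOn ℓ (Ici 1))
    (hℓsv : ∀ lam > (0:ℝ), Tendsto (fun x => ℓ (lam * x) / ℓ x) atTop (nhds 1))
    (ε : ℝ) (hε : 0 < ε) :
    ∃ M X : ℝ, 0 < M ∧ 1 ≤ X ∧ ∀ x ≥ X, ℓ x ≤ M * x ^ ε := by
  have h2 : (1:ℝ) < 2 ^ ε := Real.one_lt_rpow (by norm_num) hε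
  have hev := (hℓsv 2 (by norm_num)).eventually_lt_const h2
  obtain ⟨X0, hX0⟩ := eventually_atTop.1 hev
  set X := max X0 1 with hX
  have hX1 : 1 ≤ X := le_max_right _ _
  have hstep : ∀ x ≥ X, ℓ (2 * x) ≤ 2 ^ ε * ℓ x := by
    intro x hx
    have h := hX0 x (le_trans (le_max_left _ _) hx)
    have hp : 0 < ℓ x := hℓpos x (le_trans hX1 hx)
    exact ((div_lt_iff₀ hp).1 h).le
  obtain ⟨M, hM⟩ := (isCompact_Icc (a := X) (b := 2 * X)).bddAbove_image
    (hℓcont.mono (fun x hx => le_trans hX1 hx.1))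
  have hMb : ∀ x ∈ Icc X (2 * X), ℓ x ≤ M := fun x hx => hM ⟨x, hx, rfl⟩
  have hMpos : 0 < M := lt_of_lt_of_le (hℓpos X hX1) (hMb X ⟨le_rfl, by linarith⟩)
  refine ⟨M, X, hMpos, hX1, ?_⟩
  have key : ∀ n : ℕ, ∀ x, X ≤ x → x ≤ 2 ^ n * (2 * X) → ℓ x ≤ M * x ^ ε := by
    intro n
    induction n with
    | zero =>
      intro x hx hx2
      have := hMb x ⟨hx, by simpa using hx2⟩
      have h1 : 1 ≤ x ^ ε := Real.one_le_rpow (le_trans hX1 hx) hε.le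
      nlinarith
    | succ n ih =>
      intro x hx hx2
      rcases le_total x (2 * X) with h | h
      · have := hMb x ⟨hx, h⟩
        have h1 : 1 ≤ x ^ ε := Real.one_le_rpow (le_trans hX1 hx) hε.le
        nlinarith
      · have hx' : X ≤ x / 2 := by linarith
        have i := ih (x / 2) hx' (by rw [pow_succ] at hx2; linarith)
        have s := hstep (x / 2) hx'
        have e : 2 * (x / 2) = x := by ring
        have e2 : x ^ ε = 2 ^ ε * (x / 2) ^ ε := by
          rw [← Real.mul_rpow (by norm_num) (by linarith), e]
        rw [e] at s
        rw [e2]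
        nlinarith
  intro x hx
  obtain ⟨n, hn⟩ := pow_unbounded_of_one_lt x (by norm_num : (1:ℝ) < 2)
  refine key n x hx ?_
  have : (0:ℝ) < 2 ^ n := by positivity
  nlinarith

theorem stmt16
    (ν δ γ : ℝ) (hν0 : 0 < ν) (hν1 : ν < 1) (hδ0 : 0 < δ) (hδ1 : δ < 1)
    (hγ : γ = δ - ν)
    (hγneg : γ < 0)
    (𝓛 ℓ : ℝ → ℝ)
    (h𝓛pos : ∀ x ∈ Ici (1:ℝ), 0 < 𝓛 x) (hℓpos : ∀ x ∈ Ici (1:ℝ), 0 < ℓ x)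
    (h𝓛cont : ContinuousOn 𝓛 (Ici 1)) (hℓcont : ContinuousOn ℓ (Ici 1))
    (h𝓛sv : ∀ lam > (0:ℝ), Tendsto (fun x => 𝓛 (lam * x) / 𝓛 x) atTop (nhds 1))
    (hℓsv : ∀ lam > (0:ℝ), Tendsto (fun x => ℓ (lam * x) / ℓ x) atTop (nhds 1))
    (hr1 : 1 < ν / δ) (hr2 : ν / δ < 2)
    (hLgam : (fun x => ℓ x / 𝓛 x - |γ|) =O[atTop] fun x => ℓ x / x ^ δ)
 :
    Tendsto (fun s => Real.exp ((1 - s) ^ (-|γ|) + ∫ u in s..(1:ℝ), (-(1 - u) ^ δ * ℓ (1 / (1 - u))) / ((1 - u) ^ (1 + ν) * 𝓛 (1 / (1 - u))) + |γ| * (1 - u) ^ (-(1 + |γ|))) * Real.exp (-(1 - s) ^ (-|γ|)))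
      (nhdsWithin 1 (Iio 1)) (nhds 1) := by
  have hδν : δ < ν := by linarith
  have hg : |γ| = ν - δ := by rw [abs_of_neg hγneg]; linarith
  have hν2 : ν < 2 * δ := (div_lt_iff₀ hδ0).1 hr2
  obtain ⟨ε, hεd⟩ : ∃ ε, ε = (2 * δ - ν) / 2 := ⟨_, rfl⟩
  have hε : 0 < ε := by rw [hεd]; linarith
  obtain ⟨M, X, hM, hX, hb⟩ := sv_bound_s16 ℓ hℓpos hℓcont hℓsv ε hε
  obtain ⟨C, hC, hCb⟩ := hLgam.exists_pos
  obtain ⟨Y, hY⟩ := eventually_atTop.1 hCb.bound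
  set F : ℝ → ℝ := fun u => (-(1 - u) ^ δ * ℓ (1 / (1 - u))) / ((1 - u) ^ (1 + ν) * 𝓛 (1 / (1 - u))) + |γ| * (1 - u) ^ (-(1 + |γ|)) with hF
  have hev : ∀ᶠ s in nhdsWithin (1:ℝ) (Iio 1), max X Y ≤ 1 / (1 - s) := by
    have h1 : Tendsto (fun s : ℝ => 1 - s) (nhdsWithin 1 (Iio 1)) (nhdsWithin 0 (Ioi 0)) := by
      refine tendsto_nhdsWithin_iff.2 ⟨?_, ?_⟩
      · have : Tendsto (fun s : ℝ => 1 - s) (nhds 1) (nhds (1 - 1)) :=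
          (continuous_const.sub continuous_id).tendsto 1
        rw [sub_self] at this
        exact this.mono_left nhdsWithin_le_nhds
      · filter_upwards [self_mem_nhdsWithin] with s hs
        simpa using hs
    have h2 := tendsto_inv_nhdsGT_zero.comp h1
    filter_upwards [h2.eventually_ge_atTop (max X Y)] with s hs
    simpa using hs
  have hbd : ∀ u : ℝ, u < 1 → max X Y ≤ 1 / (1 - u) → ‖F u‖ ≤ C * M * (1 - u) ^ (ε - 1) := by
    intro u hu hx
    have ht : 0 < 1 - u := by linarith
    set t := 1 - u with htd
    have hxX : X ≤ 1 / t := le_trans (le_max_left _ _) hx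
    have hL := hY (1 / t) (le_trans (le_max_right _ _) hx)
    have hl := hb (1 / t) hxX
    have hLp : 0 < 𝓛 (1 / t) := h𝓛pos _ (le_trans hX hxX)
    have hlp : 0 < ℓ (1 / t) := hℓpos _ (le_trans hX hxX)
    have hi : ∀ a : ℝ, (1 / t) ^ a = t ^ (-a) := by
      intro a
      rw [one_div, Real.inv_rpow ht.le, Real.rpow_neg ht.le]
    have e1 : F u = -(t ^ (-(1 + |γ|)) * (ℓ (1 / t) / 𝓛 (1 / t) - |γ|)) := by
      have e : t ^ δ = t ^ (-(1 + |γ|)) * t ^ (1 + ν) := by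
        rw [← Real.rpow_add ht, hg]; congr 1; ring
      have hp : 0 < t ^ (1 + ν) := Real.rpow_pos_of_pos ht _
      simp only [hF, ← htd]
      rw [e]
      field_simp
      ring
    have hlb : ℓ (1 / t) / (1 / t) ^ δ ≤ M * t ^ (δ - ε) := by
      rw [div_le_iff₀ (by positivity)]
      refine hl.trans (le_of_eq ?_)
      rw [hi, hi, mul_assoc, ← Real.rpow_add ht]
      congr 2; ring
    have hq : 0 < t ^ (-(1 + |γ|)) := Real.rpow_pos_of_pos ht _
    rw [e1, norm_neg, norm_mul, Real.norm_of_nonneg hq.le]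
    rw [Real.norm_of_nonneg (by positivity : 0 ≤ ℓ (1 / t) / (1 / t) ^ δ)] at hL
    calc t ^ (-(1 + |γ|)) * ‖ℓ (1 / t) / 𝓛 (1 / t) - |γ|‖
        ≤ t ^ (-(1 + |γ|)) * (C * (M * t ^ (δ - ε))) := by
          gcongr
          exact hL.trans (by gcongr)
      _ = C * M * (t ^ (-(1 + |γ|)) * t ^ (δ - ε)) := by ring
      _ = C * M * t ^ (ε - 1) := by
          rw [← Real.rpow_add ht]
          congr 2
          rw [hg, hεd]; ring
  have hint : ∀ s : ℝ, IntervalIntegrable (fun u : ℝ => C * M * (1 - u) ^ (ε - 1)) volume s 1 := by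
    intro s
    have h : IntervalIntegrable (fun x : ℝ => x ^ (ε - 1)) volume (1 - s) 0 :=
      intervalIntegral.intervalIntegrable_rpow' (by linarith)
    have h2 := (h.comp_sub_left 1).const_mul (C * M)
    simpa using h2
  have hval : ∀ s : ℝ, ∫ u in s..(1:ℝ), C * M * (1 - u) ^ (ε - 1) = C * M * ((1 - s) ^ ε / ε) := by
    intro s
    rw [intervalIntegral.integral_const_mul,
      intervalIntegral.integral_comp_sub_left (fun x : ℝ => x ^ (ε - 1)) 1, sub_self,
      integral_rpow (Or.inl (by linarith))]
    simp [Real.zero_rpow hε.ne']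
  have hI : Tendsto (fun s => ∫ u in s..(1:ℝ), F u) (nhdsWithin 1 (Iio 1)) (nhds 0) := by
    refine squeeze_zero_norm' (a := fun s => C * M * ((1 - s) ^ ε / ε)) ?_ ?_
    · filter_upwards [hev, self_mem_nhdsWithin] with s hs hs1
      have hs1' : s < 1 := hs1
      rw [← hval s]
      refine intervalIntegral.norm_integral_le_of_norm_le hs1'.le ?_ (hint s)
      have hne : ∀ᵐ u : ℝ ∂volume, u ≠ 1 := by
        simp [ae_iff]
      filter_upwards [hne] with u hu1 hu
      have hu' : u < 1 := lt_of_le_of_ne hu.2 hu1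
      refine hbd u hu' (hs.trans ?_)
      exact one_div_le_one_div_of_le (by linarith) (by linarith [hu.1])
    · have hc : Continuous (fun s : ℝ => C * M * ((1 - s) ^ ε / ε)) := by
        have : Continuous (fun s : ℝ => (1 - s) ^ ε) :=
          (continuous_const.sub continuous_id).rpow_const (fun _ => Or.inr hε.le)
        exact continuous_const.mul (this.div_const _)
      have := hc.tendsto 1
      simp only [sub_self, Real.zero_rpow hε.ne', zero_div, mul_zero] at this
      exact this.mono_left nhdsWithin_le_nhds
  have hE := (Real.continuous_exp.tendsto 0).comp hI
  rw [Real.exp_zero] at hE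
  refine hE.congr (fun s => ?_)
  rw [← Real.exp_add]
  simp only [Function.comp]
  congr 1
  ring
end

section
/- Assume γ<0 and that ∫_0^1 | g(u)/f(u) + |γ|·(1−u)^{−(1+|γ|)} | du < ∞. Define π(s)=exp( (1−s)^{−|γ|} + ∫_s^1 [ g(u)/f(u) + |γ|·(1−u)^{−(1+|γ|)} ] du ) for s∈[0,1). Then π satisfies the Schröder-type functional equation π(F(τ;s)) = π(s)/P(τ;s) for every τ≥0 and s∈[0,1). -/
open Real Filter Asymptotics Set MeasureTheory

theorem stmt18
    (ν δ γ : ℝ) (hν0 : 0 < ν) (hν1 : ν < 1) (hδ0 : 0 < δ) (hδ1 : δ < 1)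
    (hγ : γ = δ - ν)
    (hγneg : γ < 0)
    (𝓛 ℓ : ℝ → ℝ)
    (h𝓛pos : ∀ x ∈ Ici (1:ℝ), 0 < 𝓛 x) (hℓpos : ∀ x ∈ Ici (1:ℝ), 0 < ℓ x)
    (h𝓛cont : ContinuousOn 𝓛 (Ici 1)) (hℓcont : ContinuousOn ℓ (Ici 1))
    (h𝓛sv : ∀ lam > (0:ℝ), Tendsto (fun x => 𝓛 (lam * x) / 𝓛 x) atTop (nhds 1))
    (hℓsv : ∀ lam > (0:ℝ), Tendsto (fun x => ℓ (lam * x) / ℓ x) atTop (nhds 1))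
    (F : ℝ → ℝ → ℝ)
    (hFmem : ∀ s ∈ Ico (0:ℝ) 1, ∀ t : ℝ, 0 ≤ t → s ≤ F t s ∧ F t s < 1)
    (hF0 : ∀ s ∈ Ico (0:ℝ) 1, F 0 s = s)
    (hFode : ∀ s ∈ Ico (0:ℝ) 1, ∀ t : ℝ, 0 ≤ t →
      HasDerivAt (fun u => F u s)
        ((1 - F t s) ^ (1 + ν) * 𝓛 (1 / (1 - F t s))) t)
    (hint : IntervalIntegrable (fun u => (-(1 - u) ^ δ * ℓ (1 / (1 - u))) / ((1 - u) ^ (1 + ν) * 𝓛 (1 / (1 - u))) + |γ| * (1 - u) ^ (-(1 + |γ|))) volume 0 1) :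
    ∀ τ : ℝ, 0 ≤ τ → ∀ s ∈ Ico (0:ℝ) 1,
      Real.exp ((1 - (F τ s)) ^ (-|γ|) + ∫ u in (F τ s)..(1:ℝ), (-(1 - u) ^ δ * ℓ (1 / (1 - u))) / ((1 - u) ^ (1 + ν) * 𝓛 (1 / (1 - u))) + |γ| * (1 - u) ^ (-(1 + |γ|))) =
        Real.exp ((1 - s) ^ (-|γ|) + ∫ u in s..(1:ℝ), (-(1 - u) ^ δ * ℓ (1 / (1 - u))) / ((1 - u) ^ (1 + ν) * 𝓛 (1 / (1 - u))) + |γ| * (1 - u) ^ (-(1 + |γ|))) / Real.exp (∫ u in (0:ℝ)..τ, -(1 - F u s) ^ δ * ℓ (1 / (1 - F u s))) := by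
  intro τ hτ s hs
  have hsub : ∀ t ∈ uIcc 0 τ, F t s ∈ Ico (0:ℝ) 1 := by
    intro t ht
    rw [uIcc_of_le hτ] at ht
    exact ⟨hs.1.trans (hFmem s hs t ht.1).1, (hFmem s hs t ht.1).2⟩
  have hle := (hFmem s hs τ hτ).1
  have hlt := (hFmem s hs τ hτ).2
  have hsub2 : uIcc s (F τ s) ⊆ Ico (0:ℝ) 1 := by
    rw [uIcc_of_le hle]
    exact fun x hx => ⟨hs.1.trans hx.1, hx.2.trans_lt hlt⟩
  have hc1 : ∀ a : ℝ, ContinuousOn (fun u : ℝ => (1 - u) ^ a) (Ico 0 1) := by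
    intro a
    refine ContinuousOn.rpow_const (by fun_prop) ?_
    intro x hx
    left
    have := hx.2
    linarith
  have hinv : ContinuousOn (fun u : ℝ => 1 / (1 - u)) (Ico 0 1) := by
    refine ContinuousOn.div (by fun_prop) (by fun_prop) ?_
    intro x hx
    have := hx.2
    linarith
  have hmaps : MapsTo (fun u : ℝ => 1 / (1 - u)) (Ico 0 1) (Ici 1) := by
    intro x hx
    have h1 := hx.1
    have h2 := hx.2
    show 1 ≤ 1 / (1 - x)
    rw [le_div_iff₀ (by linarith)]
    linarith
  have hcL : ContinuousOn (fun u : ℝ => 𝓛 (1 / (1 - u))) (Ico 0 1) := h𝓛cont.comp hinv hmaps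
  have hcl : ContinuousOn (fun u : ℝ => ℓ (1 / (1 - u))) (Ico 0 1) := hℓcont.comp hinv hmaps
  have hcf : ContinuousOn (fun u : ℝ => (1 - u) ^ (1 + ν) * 𝓛 (1 / (1 - u))) (Ico 0 1) :=
    (hc1 _).mul hcL
  have hcg : ContinuousOn (fun u : ℝ => -(1 - u) ^ δ * ℓ (1 / (1 - u))) (Ico 0 1) :=
    (hc1 _).neg.mul hcl
  have hfne : ∀ u ∈ Ico (0:ℝ) 1, (1 - u) ^ (1 + ν) * 𝓛 (1 / (1 - u)) ≠ 0 := by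
    intro u hu
    have h1 : 0 < 1 - u := by linarith [hu.2]
    exact (mul_pos (Real.rpow_pos_of_pos h1 _) (h𝓛pos _ (hmaps hu))).ne'
  have hcq : ContinuousOn (fun u : ℝ => (-(1 - u) ^ δ * ℓ (1 / (1 - u))) /
      ((1 - u) ^ (1 + ν) * 𝓛 (1 / (1 - u)))) (Ico 0 1) := hcg.div hcf hfne
  have hcr : ContinuousOn (fun u : ℝ => |γ| * (1 - u) ^ (-(1 + |γ|))) (Ico 0 1) :=
    continuousOn_const.mul (hc1 _)
  have hFc : ContinuousOn (fun u => F u s) (uIcc 0 τ) := by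
    intro t ht
    rw [uIcc_of_le hτ] at ht
    exact (hFode s hs t ht.1).continuousAt.continuousWithinAt
  have hq : (∫ u in s..(F τ s), (-(1 - u) ^ δ * ℓ (1 / (1 - u))) /
      ((1 - u) ^ (1 + ν) * 𝓛 (1 / (1 - u)))) =
      ∫ u in (0:ℝ)..τ, -(1 - F u s) ^ δ * ℓ (1 / (1 - F u s)) := by
    have h := intervalIntegral.integral_comp_mul_deriv'' (a := 0) (b := τ)
      (f := fun u => F u s) (f' := fun t => (1 - F t s) ^ (1 + ν) * 𝓛 (1 / (1 - F t s)))
      (g := fun u : ℝ => (-(1 - u) ^ δ * ℓ (1 / (1 - u))) /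
        ((1 - u) ^ (1 + ν) * 𝓛 (1 / (1 - u)))) hFc
      (by
        intro t ht
        rw [min_eq_left hτ] at ht
        exact (hFode s hs t ht.1.le).hasDerivWithinAt)
      (hcf.comp hFc hsub)
      (hcq.mono (by
        rintro _ ⟨t, ht, rfl⟩
        exact hsub t ht))
    simp only [hF0 s hs] at h
    rw [← h]
    refine intervalIntegral.integral_congr ?_
    intro t ht
    exact div_mul_cancel₀ _ (hfne _ (hsub t ht))
  have hr : (∫ u in s..(F τ s), |γ| * (1 - u) ^ (-(1 + |γ|))) =
      (1 - F τ s) ^ (-|γ|) - (1 - s) ^ (-|γ|) := by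
    refine intervalIntegral.integral_eq_sub_of_hasDerivAt
      (f := fun u : ℝ => (1 - u) ^ (-|γ|)) ?_ ((hcr.mono hsub2).intervalIntegrable)
    intro x hx
    have hx1 : 1 - x ≠ 0 := by linarith [(hsub2 hx).2]
    have h := ((hasDerivAt_id x).const_sub 1).rpow_const (p := -|γ|) (Or.inl hx1)
    have he : |γ| * (1 - x) ^ (-(1 + |γ|)) = -1 * -|γ| * (1 - id x) ^ (-|γ| - 1) := by
      rw [show -(1 + |γ|) = -|γ| - 1 by ring, id]
      ring
    rw [he]
    exact h
  have hadd := intervalIntegral.integral_add (hcq.mono hsub2).intervalIntegrable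
    (hcr.mono hsub2).intervalIntegrable (μ := volume)
  have hi2 : IntervalIntegrable (fun u => (-(1 - u) ^ δ * ℓ (1 / (1 - u))) / ((1 - u) ^ (1 + ν) * 𝓛 (1 / (1 - u))) + |γ| * (1 - u) ^ (-(1 + |γ|))) volume (F τ s) 1 := by
    refine hint.mono_set ?_
    rw [uIcc_of_le hlt.le, uIcc_of_le zero_le_one]
    exact Icc_subset_Icc_left (hs.1.trans hle)
  have hadj := intervalIntegral.integral_add_adjacent_intervals
    (((hcq.add hcr).mono hsub2).intervalIntegrable (μ := volume)) hi2
  rw [← Real.exp_sub, ← hq]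
  congr 1
  simp only [Pi.add_apply] at hadj
  linarith [hadj, hadd, hr]
end

section
/- For every t≥0, −ln p₀₀(t) = ∫_1^{τ(t)} y^{−(1+γ)}·L(y) dy, where τ(t)=1/(1−F(t;0)). -/
open Real Filter Asymptotics Set MeasureTheory

theorem stmt19
    (ν δ γ : ℝ) (hν0 : 0 < ν) (hν1 : ν < 1) (hδ0 : 0 < δ) (hδ1 : δ < 1)
    (hγ : γ = δ - ν)
    (𝓛 ℓ : ℝ → ℝ)
    (h𝓛pos : ∀ x ∈ Ici (1:ℝ), 0 < 𝓛 x) (hℓpos : ∀ x ∈ Ici (1:ℝ), 0 < ℓ x)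
    (h𝓛cont : ContinuousOn 𝓛 (Ici 1)) (hℓcont : ContinuousOn ℓ (Ici 1))
    (h𝓛sv : ∀ lam > (0:ℝ), Tendsto (fun x => 𝓛 (lam * x) / 𝓛 x) atTop (nhds 1))
    (hℓsv : ∀ lam > (0:ℝ), Tendsto (fun x => ℓ (lam * x) / ℓ x) atTop (nhds 1))
    (F : ℝ → ℝ → ℝ)
    (hFmem : ∀ s ∈ Ico (0:ℝ) 1, ∀ t : ℝ, 0 ≤ t → s ≤ F t s ∧ F t s < 1)
    (hF0 : ∀ s ∈ Ico (0:ℝ) 1, F 0 s = s)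
    (hFode : ∀ s ∈ Ico (0:ℝ) 1, ∀ t : ℝ, 0 ≤ t →
      HasDerivAt (fun u => F u s)
        ((1 - F t s) ^ (1 + ν) * 𝓛 (1 / (1 - F t s))) t)
 :
    ∀ t : ℝ, 0 ≤ t →
      -Real.log (Real.exp (∫ u in (0:ℝ)..t, -(1 - F u 0) ^ δ * ℓ (1 / (1 - F u 0)))) =
        ∫ y in (1:ℝ)..(1 / (1 - F t 0)), y ^ (-(1 + γ)) * (ℓ y / 𝓛 y) := by
  intro t ht
  have h0 : (0:ℝ) ∈ Ico (0:ℝ) 1 := ⟨le_refl _, one_pos⟩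
  have hx : ∀ u : ℝ, 0 ≤ u → 0 < 1 - F u 0 := fun u hu => by
    have := (hFmem 0 h0 u hu).2
    linarith
  have hy : ∀ u : ℝ, 0 ≤ u → 0 < 𝓛 (1 / (1 - F u 0)) := fun u hu => by
    apply h𝓛pos
    rw [mem_Ici, le_div_iff₀ (hx u hu)]
    have := (hFmem 0 h0 u hu).1
    linarith
  have hder : ∀ u : ℝ, 0 ≤ u → HasDerivAt (fun u => 1 / (1 - F u 0))
      (((1 - F u 0) ^ (1 + ν) * 𝓛 (1 / (1 - F u 0))) / (1 - F u 0) ^ 2) u := fun u hu => by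
    have h1 := ((hFode 0 h0 u hu).const_sub 1).inv (hx u hu).ne'
    rw [neg_neg] at h1
    have e : (fun u => 1 / (1 - F u 0)) = (fun u => 1 - F u 0)⁻¹ := by
      funext u
      simp
    rw [e]
    exact h1
  have key := intervalIntegral.integral_comp_mul_deriv_of_deriv_nonneg (a := 0) (b := t)
    (f := fun u => 1 / (1 - F u 0))
    (f' := fun u => ((1 - F u 0) ^ (1 + ν) * 𝓛 (1 / (1 - F u 0))) / (1 - F u 0) ^ 2)
    (g := fun y => y ^ (-(1 + γ)) * (ℓ y / 𝓛 y))
    (fun u hu => by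
      rw [uIcc_of_le ht] at hu
      exact (hder u hu.1).continuousAt.continuousWithinAt)
    (fun u hu => by
      rw [min_eq_left ht] at hu
      exact hder u hu.1.le)
    (fun u hu => by
      rw [min_eq_left ht] at hu
      have h1 := hx u hu.1.le
      have h2 := hy u hu.1.le
      positivity)
  simp only [hF0 0 h0, sub_zero, div_one] at key
  rw [← key, Real.log_exp, ← intervalIntegral.integral_neg]
  apply intervalIntegral.integral_congr
  intro u hu
  rw [uIcc_of_le ht] at hu
  have h1 := hx u hu.1
  have h2 := hy u hu.1
  simp only [Function.comp]
  generalize 1 - F u 0 = x at h1 h2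
  have e1 : (1 / x) ^ (-(1 + γ)) = x ^ (1 + γ) := by
    rw [one_div, Real.inv_rpow h1.le, Real.rpow_neg h1.le, inv_inv]
  have e2 : x ^ (1 + γ) * x ^ (1 + ν) = x ^ δ * x ^ 2 := by
    rw [← Real.rpow_add h1, ← Real.rpow_natCast, ← Real.rpow_add h1, hγ]
    congr 1
    push_cast
    ring
  rw [e1]
  generalize 𝓛 (1 / x) = A at h2
  generalize ℓ (1 / x) = B
  have : x ^ (1 + γ) * (B / A) * (x ^ (1 + ν) * A / x ^ 2)
      = (x ^ (1 + γ) * x ^ (1 + ν)) * B / x ^ 2 := by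
    field_simp
  rw [this, e2]
  field_simp
end
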